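/- arXiv:1506.07076 — 9 statements merged into one kernel-verified Lean document; each statement's English description precedes it below -/
import Mathlib

section
/- Let G be a bipartite graph, let 0 < ε < 1, and let β > 8ε^{-2}. Let H be a weighted edge-degree-constrained subgraph EDCS(G, β, β−1) of G. Then μ(H) ≥ (1 − ε)·μ(G), where μ(H) denotes the maximum matching size in the (unweighted) support of H and μ(G) the maximum matching size in G. -/
/-- The maximum size of a matching (a finite set of pairwise vertex-disjoint edges)
contained in a set of edges `E`. -/
noncomputable def nuSet {V : Type*} (E : Set (Sym2 V)) : ℕ :=
  sSup {n | ∃ M : Finset (Sym2 V), ↑M ⊆ E ∧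
    (∀ e ∈ M, ∀ f ∈ M, e ≠ f → ∀ v : V, v ∈ e → v ∉ f) ∧ M.card = n}

/-- The weighted degree of `v`: the sum, over edges of `G` incident to `v`,
of the weight `w` of the edge. -/
def wdeg {V : Type*} [Fintype V] [DecidableEq V] (G : SimpleGraph V) [DecidableRel G.Adj]
    (w : Sym2 V → ℕ) (v : V) : ℕ :=
  ∑ u ∈ G.neighborFinset v, w s(v, u)

open Finset

/-- Deficiency version of Hall's theorem. -/
theorem exists_partial_injection_of_card_le_add {ι α : Type*} [Fintype ι] [DecidableEq α]
    (t : ι → Finset α) (D : ℕ) (h : ∀ S : Finset ι, S.card ≤ (S.biUnion t).card + D) :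
    ∃ (T : Finset ι) (f : ι → Option α), Fintype.card ι ≤ T.card + D ∧
      (∀ i ∈ T, ∃ a ∈ t i, f i = some a) ∧ Set.InjOn f T := by
  classical
  have hall : ∀ S : Finset ι,
      S.card ≤ (S.biUnion fun i => (t i).disjSum (univ : Finset (Fin D))).card := by
    intro S
    rcases S.eq_empty_or_nonempty with rfl | ⟨i₀, hi₀⟩
    · simp
    · have hsub : (S.biUnion t).disjSum (univ : Finset (Fin D)) ⊆
          S.biUnion fun i => (t i).disjSum (univ : Finset (Fin D)) := by
        intro x hx
        rcases x with a | d
        · simpa using hx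
        · simpa using ⟨i₀, hi₀⟩
      calc S.card ≤ (S.biUnion t).card + D := h S
        _ = ((S.biUnion t).disjSum (univ : Finset (Fin D))).card := by simp
        _ ≤ _ := card_le_card hsub
  obtain ⟨g, hg, hgt⟩ := (all_card_le_biUnion_card_iff_exists_injective _).1 hall
  refine ⟨univ.filter fun i => (g i).isLeft, fun i => (g i).getLeft?, ?_, ?_, ?_⟩
  · have hright : (univ.filter fun i => ¬ (g i).isLeft = true).card ≤ D := by
      calc _ = ((univ.filter fun i => ¬ (g i).isLeft = true).image g).card :=
            (card_image_of_injective _ hg).symm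
        _ ≤ ((univ : Finset (Fin D)).image (Sum.inr : Fin D → α ⊕ Fin D)).card := by
            apply card_le_card
            intro x hx
            obtain ⟨i, hi, rfl⟩ := mem_image.1 hx
            rcases hgi : g i with a | d
            · simp [hgi] at hi
            · simp
        _ ≤ D := card_image_le.trans (by simp)
    have hsplit := card_filter_add_card_filter_not (s := (univ : Finset ι))
      (fun i => (g i).isLeft = true)
    rw [card_univ] at hsplit
    omega
  · intro i hi
    have hti := hgt i
    rcases hgi : g i with a | d
    · rw [hgi] at hti
      exact ⟨a, by simpa using hti, by simp [hgi]⟩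
    · simp [hgi] at hi
  · intro i hi j hj hij
    apply hg
    rcases hgi : g i with a | d <;> rcases hgj : g j with b | d' <;> simp_all

/-- A bipartite fractional matching is dominated by an integral matching in its support. -/
theorem exists_matching_of_fractional {α β : Type*} [Fintype α] [Fintype β]
    (x : α → β → ℝ) (hx : ∀ u v, 0 ≤ x u v)
    (hrow : ∀ u, ∑ v, x u v ≤ 1) (hcol : ∀ v, ∑ u, x u v ≤ 1) :
    ∃ (T : Finset α) (f : α → Option β), ∑ u, ∑ v, x u v ≤ T.card ∧
      (∀ u ∈ T, ∃ v, x u v ≠ 0 ∧ f u = some v) ∧ Set.InjOn f T := by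
  classical
  set F := ∑ u, ∑ v, x u v with hF
  have hbound : ∀ S : Finset α,
      F ≤ (((S.biUnion fun u => univ.filter fun v => x u v ≠ 0).card + Sᶜ.card : ℕ) : ℝ) := by
    intro S
    have hS : ∑ u ∈ S, ∑ v, x u v ≤ (S.biUnion fun u => univ.filter fun v => x u v ≠ 0).card := by
      calc ∑ u ∈ S, ∑ v, x u v
          = ∑ u ∈ S, ∑ v ∈ S.biUnion fun u => univ.filter fun v => x u v ≠ 0, x u v := by
            refine sum_congr rfl fun u hu => (sum_subset (subset_univ _) ?_).symm
            intro v _ hv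
            by_contra hne
            exact hv (mem_biUnion.2 ⟨u, hu, by simpa using hne⟩)
        _ = ∑ v ∈ S.biUnion fun u => univ.filter fun v => x u v ≠ 0, ∑ u ∈ S, x u v := sum_comm
        _ ≤ ∑ v ∈ S.biUnion fun u => univ.filter fun v => x u v ≠ 0, (1 : ℝ) := by
            refine sum_le_sum fun v _ => le_trans ?_ (hcol v)
            exact sum_le_sum_of_subset_of_nonneg (subset_univ _) fun u _ _ => hx u v
        _ = _ := by simp
    have hSc : ∑ u ∈ Sᶜ, ∑ v, x u v ≤ Sᶜ.card := by
      calc _ ≤ ∑ u ∈ Sᶜ, (1 : ℝ) := sum_le_sum fun u _ => hrow u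
        _ = _ := by simp
    have := sum_add_sum_compl S fun u => ∑ v, x u v
    push_cast
    linarith
  have hdef : ∀ S : Finset α, S.card ≤
      (S.biUnion fun u => univ.filter fun v => x u v ≠ 0).card + (Fintype.card α - ⌈F⌉₊) := by
    intro S
    have h1 := Nat.ceil_le.2 (hbound S)
    have h2 := card_add_card_compl S
    omega
  obtain ⟨T, f, hT, hf, hinj⟩ := exists_partial_injection_of_card_le_add _ _ hdef
  refine ⟨T, f, ?_, ?_, hinj⟩
  · have h1 := Nat.ceil_le.2 (hbound ∅)
    simp only [biUnion_empty, card_empty, compl_empty, card_univ] at h1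
    exact (Nat.le_ceil F).trans (by exact_mod_cast (by omega : ⌈F⌉₊ ≤ T.card))
  · intro u hu
    obtain ⟨v, hv, hfv⟩ := hf u hu
    exact ⟨v, by simpa using hv, hfv⟩

/-- The total charge an edge with end degrees `a`, `b` receives from the threshold covers
with parameter in `Icc T (B / 2)`. -/
theorem sum_threshold_charge_le {a b B T : ℕ} {K : ℝ} (hT : 1 ≤ T) (hTB : T ≤ B / 2)
    (ha : 0 < a) (hb : 0 < b) (hle : a + b ≤ B)
    (hK : ((B / 2 + 1 - T : ℕ) : ℝ) + 1 + (2 * ((B / 2 + 1 - T : ℕ) : ℝ) + 1) ^ 2 / (8 * T) ≤ K) :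
    ∑ θ ∈ Icc T (B / 2), ((if θ ≤ a then (1 / a : ℝ) else 0) +
      (if B ≤ b + θ then (1 / b : ℝ) else 0)) ≤ K / (max a b : ℕ) := by
  rw [sum_add_distrib, ← sum_filter, ← sum_filter, sum_const, sum_const, nsmul_eq_mul,
    nsmul_eq_mul]
  have hp : ((Icc T (B / 2)).filter fun θ => θ ≤ a).card ≤ min a (B / 2) + 1 - T := by
    rw [← Nat.card_Icc]
    refine card_le_card fun θ hθ => ?_
    simp only [mem_filter, mem_Icc] at hθ ⊢
    omega
  have hq : ((Icc T (B / 2)).filter fun θ => B ≤ b + θ).card ≤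
      B / 2 + 1 - max T (B - b) := by
    rw [← Nat.card_Icc]
    refine card_le_card fun θ hθ => ?_
    simp only [mem_filter, mem_Icc] at hθ ⊢
    omega
  generalize ((Icc T (B / 2)).filter fun θ => θ ≤ a).card = p at hp ⊢
  generalize ((Icc T (B / 2)).filter fun θ => B ≤ b + θ).card = q at hq ⊢
  have ha' : (0 : ℝ) < a := by exact_mod_cast ha
  have hb' : (0 : ℝ) < b := by exact_mod_cast hb
  have hT' : (1 : ℝ) ≤ T := by exact_mod_cast hT
  set N := B / 2 + 1 - T with hN
  have hpos : 0 ≤ (2 * (N : ℝ) + 1) ^ 2 / (8 * T) := by positivity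
  rcases le_or_gt b a with hba | hab
  · rw [max_eq_left hba]
    have hsum : (p : ℝ) + q ≤ N + 1 := by exact_mod_cast (by omega : p + q ≤ N + 1)
    have hq' : (q : ℝ) * (1 / b) = q * (1 / a) := by
      rcases Nat.eq_zero_or_pos q with rfl | hq0
      · simp
      · rw [show a = b by omega]
    rw [hq', ← add_mul, mul_one_div]
    gcongr
    linarith
  · rw [max_eq_right hab.le]
    rcases Nat.eq_zero_or_pos p with rfl | hp0
    · have hqN : (q : ℝ) ≤ N := by exact_mod_cast (by omega : q ≤ N)
      rw [Nat.cast_zero, zero_mul, zero_add, mul_one_div]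
      gcongr
      linarith
    · have hsum : (p : ℝ) + q ≤ N + 1 := by exact_mod_cast (by omega : p + q ≤ N + 1)
      have hTa : (T : ℝ) ≤ a := by exact_mod_cast (by omega : T ≤ a)
      have hdiff : (b : ℝ) - a ≤ 2 * (N - p) + 1 := by
        have : b + 2 * p ≤ 2 * N + 1 + a := by omega
        have : (b : ℝ) + 2 * p ≤ 2 * N + 1 + a := by exact_mod_cast this
        linarith
      have hquad : (p : ℝ) * (b - a) ≤ (2 * N + 1) ^ 2 / 8 := by
        have : (p : ℝ) * (b - a) ≤ p * (2 * (N - p) + 1) := by gcongr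
        nlinarith [sq_nonneg (4 * (p : ℝ) - (2 * N + 1))]
      have hfrac : (p : ℝ) * (b - a) / a ≤ (2 * N + 1) ^ 2 / (8 * T) := by
        rw [← div_div]
        gcongr
      have heq : (p : ℝ) * (1 / a) + q * (1 / b) = (p + q + p * (b - a) / a) / b := by
        field_simp
        ring
      rw [heq]
      gcongr
      linarith

/-- Some threshold cover is, up to the factor `K / N`, no larger than the fractional matching
`W u v / max (r u) (c v)`, where `r` and `c` are the row and column sums of `W`. -/
theorem exists_threshold_card_le {α β : Type*} [Fintype α] [Fintype β]
    (W : α → β → ℕ) {B T : ℕ} {K : ℝ} (hT : 1 ≤ T) (hTB : T ≤ B / 2)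
    (hle : ∀ u v, W u v ≠ 0 → ∑ v', W u v' + ∑ u', W u' v ≤ B)
    (hK : ((B / 2 + 1 - T : ℕ) : ℝ) + 1 + (2 * ((B / 2 + 1 - T : ℕ) : ℝ) + 1) ^ 2 / (8 * T) ≤ K) :
    ∃ θ, ((B / 2 + 1 - T : ℕ) : ℝ) *
      ((univ.filter fun u => θ ≤ ∑ v, W u v).card +
        (univ.filter fun v => B ≤ ∑ u, W u v + θ).card) ≤
      K * ∑ u, ∑ v, (W u v : ℝ) / (max (∑ v', W u v') (∑ u', W u' v) : ℕ) := by
  set r : α → ℕ := fun u => ∑ v, W u v with hr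
  set c : β → ℕ := fun v => ∑ u, W u v with hc
  have hrow : ∀ u, ∑ v, (W u v : ℝ) = r u := fun u => by simp [hr]
  have hcol : ∀ v, ∑ u, (W u v : ℝ) = c v := fun v => by simp [hc]
  have hcard : ∀ θ ∈ Icc T (B / 2),
      (((univ.filter fun u => θ ≤ r u).card + (univ.filter fun v => B ≤ c v + θ).card : ℝ)) =
      ∑ u, ∑ v, (W u v : ℝ) * ((if θ ≤ r u then (1 / r u : ℝ) else 0) +
        (if B ≤ c v + θ then (1 / c v : ℝ) else 0)) := by
    intro θ hθ
    rw [mem_Icc] at hθ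
    simp only [mul_add, sum_add_distrib]
    congr 1
    · rw [card_filter]
      push_cast
      refine sum_congr rfl fun u _ => ?_
      rw [← sum_mul, hrow]
      split_ifs with h
      · have : (r u : ℝ) ≠ 0 := by exact_mod_cast (by omega : r u ≠ 0)
        field_simp
      · simp
    · rw [card_filter, sum_comm]
      push_cast
      refine sum_congr rfl fun v _ => ?_
      rw [← sum_mul, hcol]
      split_ifs with h
      · have : (c v : ℝ) ≠ 0 := by exact_mod_cast (by omega : c v ≠ 0)
        field_simp
      · simp
  have htotal : ∑ θ ∈ Icc T (B / 2),
      (((univ.filter fun u => θ ≤ r u).card + (univ.filter fun v => B ≤ c v + θ).card : ℝ)) ≤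
      K * ∑ u, ∑ v, (W u v : ℝ) / (max (r u) (c v) : ℕ) := by
    rw [sum_congr rfl hcard, sum_comm, mul_sum]
    refine sum_le_sum fun u _ => ?_
    rw [sum_comm, mul_sum]
    refine sum_le_sum fun v _ => ?_
    rw [← mul_sum]
    rcases Nat.eq_zero_or_pos (W u v) with h0 | h0
    · simp [h0]
    · have hru : W u v ≤ r u := single_le_sum (f := W u) (fun _ _ => Nat.zero_le _) (mem_univ v)
      have hcv : W u v ≤ c v :=
        single_le_sum (f := fun u => W u v) (fun _ _ => Nat.zero_le _) (mem_univ u)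
      have := sum_threshold_charge_le hT hTB (h0.trans_le hru) (h0.trans_le hcv)
        (hle u v h0.ne') hK
      calc _ ≤ (W u v : ℝ) * (K / (max (r u) (c v) : ℕ)) := by gcongr
        _ = _ := by ring
  have hNpos : (0 : ℝ) < (B / 2 + 1 - T : ℕ) := by
    exact_mod_cast (by omega : 0 < B / 2 + 1 - T)
  have hne : (Icc T (B / 2)).Nonempty := nonempty_Icc.2 hTB
  obtain ⟨θ, -, hθ⟩ := exists_le_of_sum_le (f := fun θ =>
      ((univ.filter fun u => θ ≤ r u).card + (univ.filter fun v => B ≤ c v + θ).card : ℝ))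
    (g := fun _ =>
      (K * ∑ u, ∑ v, (W u v : ℝ) / (max (r u) (c v) : ℕ)) / (B / 2 + 1 - T : ℕ)) hne <| by
    rw [sum_const, nsmul_eq_mul, Nat.card_Icc, mul_div_cancel₀ _ hNpos.ne']
    exact htotal
  refine ⟨θ, ?_⟩
  rw [le_div_iff₀ hNpos, mul_comm] at hθ
  exact hθ

theorem nuSet_le_card_of_cover {V : Type*} (E : Set (Sym2 V)) (C : Finset V)
    (hC : ∀ e ∈ E, ∃ v ∈ C, v ∈ e) : nuSet E ≤ C.card := by
  classical
  refine csSup_le' ?_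
  rintro n ⟨M, hME, hM, rfl⟩
  have hC' : ∀ e : Sym2 V, ∃ v, e ∈ E → v ∈ C ∧ v ∈ e := by
    intro e
    by_cases he : e ∈ E
    · obtain ⟨v, hv⟩ := hC e he
      exact ⟨v, fun _ => hv⟩
    · exact ⟨e.out.1, fun h => absurd h he⟩
  choose g hg using hC'
  refine card_le_card_of_injOn g (fun e he => (hg e (hME he)).1) ?_
  intro e he f hf hef
  by_contra hne
  exact hM e he f hf hne (g e) (hg e (hME he)).2 (hef ▸ (hg f (hME hf)).2)

theorem card_le_nuSet {V : Type*} [Fintype V] (E : Set (Sym2 V)) (M : Finset (Sym2 V))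
    (hME : ↑M ⊆ E) (hM : ∀ e ∈ M, ∀ f ∈ M, e ≠ f → ∀ v : V, v ∈ e → v ∉ f) :
    M.card ≤ nuSet E := by
  classical
  refine le_csSup ⟨Fintype.card (Sym2 V), ?_⟩ ⟨M, hME, hM, rfl⟩
  rintro n ⟨M', -, -, rfl⟩
  exact card_le_univ M'

/-- A partial injection from a vertex set `L` to its complement along edges of `E`
gives a matching. -/
theorem card_le_nuSet_of_injOn {V : Type*} [Fintype V] (E : Set (Sym2 V)) (L T : Finset V)
    (f : V → Option V) (hf : ∀ u ∈ T, ∃ v, (u ∈ L ∧ v ∉ L ∧ s(u, v) ∈ E) ∧ f u = some v)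
    (hinj : Set.InjOn f T) : T.card ≤ nuSet E := by
  classical
  choose! g hg hfg using hf
  have hdisj : ∀ u ∈ T, ∀ u' ∈ T, ∀ v, v ∈ s(u, g u) → v ∈ s(u', g u') → u = u' := by
    intro u hu u' hu' v hv hv'
    obtain ⟨hL, hR, -⟩ := hg u hu
    obtain ⟨hL', hR', -⟩ := hg u' hu'
    rw [Sym2.mem_iff] at hv hv'
    rcases hv with rfl | rfl <;> rcases hv' with h | h
    · exact h
    · exact absurd (h ▸ hL) hR'
    · exact absurd (h ▸ hL') hR
    · exact hinj hu hu' (by rw [hfg u hu, hfg u' hu', h])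
  have hcard : (T.image fun u => s(u, g u)).card = T.card :=
    card_image_of_injOn fun u hu u' hu' h =>
      hdisj u hu u' hu' u (Sym2.mem_mk_left _ _) (by
        have h' : s(u, g u) = s(u', g u') := h
        rw [← h']; exact Sym2.mem_mk_left _ _)
  rw [← hcard]
  refine card_le_nuSet E _ ?_ ?_
  · intro e he
    obtain ⟨u, hu, rfl⟩ := mem_image.1 (mem_coe.1 he)
    exact (hg u hu).2.2
  · intro e he f' hf' hne v hv hv'
    obtain ⟨u, hu, rfl⟩ := mem_image.1 he
    obtain ⟨u', hu', rfl⟩ := mem_image.1 hf'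
    exact hne (by rw [hdisj u hu u' hu' v hv hv'])

/-- For `B + 1 > 8 / ε ^ 2` there is a window of thresholds for which the loss is at most
`1 / (1 - ε)`. -/
theorem exists_threshold_window {ε : ℝ} (hε0 : 0 < ε) (hε1 : ε < 1) {B : ℕ}
    (hB : 8 * ε⁻¹ ^ 2 < B + 1) :
    ∃ T : ℕ, 1 ≤ T ∧ T ≤ B / 2 ∧
      ((B / 2 + 1 - T : ℕ) : ℝ) + 1 + (2 * ((B / 2 + 1 - T : ℕ) : ℝ) + 1) ^ 2 / (8 * T) ≤
        ((B / 2 + 1 - T : ℕ) : ℝ) / (1 - ε) := by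
  set δ := ε⁻¹ with hδ
  have hδ1 : 1 < δ := (one_lt_inv₀ hε0).2 hε1
  have hδε : ε * δ = 1 := mul_inv_cancel₀ hε0.ne'
  set N := ⌈2 * δ⌉₊ with hN
  have hN1 : 2 * δ ≤ N := Nat.le_ceil _
  have hN2 : (N : ℝ) < 2 * δ + 1 := Nat.ceil_lt_add_one (by positivity)
  have hhalf : 4 * δ ^ 2 - 1 < ((B / 2 : ℕ) : ℝ) := by
    have : (B : ℝ) ≤ 2 * ((B / 2 : ℕ) : ℝ) + 1 := by exact_mod_cast (by omega : B ≤ 2 * (B / 2) + 1)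
    linarith
  have hNB : N ≤ B / 2 := by
    have : (N : ℝ) < ((B / 2 : ℕ) : ℝ) + 1 := by nlinarith
    have : N < B / 2 + 1 := by exact_mod_cast this
    omega
  have hN0 : 0 < N := by
    have : (0 : ℝ) < N := by linarith
    exact_mod_cast this
  refine ⟨B / 2 + 1 - N, by omega, by omega, ?_⟩
  rw [show B / 2 + 1 - (B / 2 + 1 - N) = N by omega]
  have hT : 4 * δ ^ 2 - 2 * δ - 1 ≤ ((B / 2 + 1 - N : ℕ) : ℝ) := by
    rw [Nat.cast_sub (by omega)]
    push_cast
    linarith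
  generalize ((B / 2 + 1 - N : ℕ) : ℝ) = t at hT ⊢
  have ht0 : 0 < t := by nlinarith
  generalize (N : ℝ) = n at hN1 hN2 ⊢
  have hn0 : 0 < n := by linarith
  have hεn : 2 ≤ ε * n := by nlinarith
  have hone : 1 ≤ ε * n / 2 := by linarith
  have hmain : (1 - ε) * (2 * n + 1) ^ 2 ≤ 4 * (1 + ε) * (ε * n) * t := by
    have hsq : (2 * n + 1) ^ 2 ≤ n * (8 * δ + 8 + ε / 2) := by nlinarith
    have hεt : 4 * δ - 2 - ε ≤ ε * t := by
      calc 4 * δ - 2 - ε = ε * (4 * δ ^ 2 - 2 * δ - 1) := by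
            linear_combination (2 - 4 * δ) * hδε
        _ ≤ ε * t := by gcongr
    have hlin : (1 - ε) * (8 * δ + 8 + ε / 2) ≤ 4 * (1 + ε) * (4 * δ - 2 - ε) := by nlinarith
    calc (1 - ε) * (2 * n + 1) ^ 2 ≤ (1 - ε) * (n * (8 * δ + 8 + ε / 2)) :=
          mul_le_mul_of_nonneg_left hsq (by linarith)
      _ = n * ((1 - ε) * (8 * δ + 8 + ε / 2)) := by ring
      _ ≤ n * (4 * (1 + ε) * (ε * t)) := by
          refine mul_le_mul_of_nonneg_left (hlin.trans ?_) hn0.le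
          gcongr
      _ = _ := by ring
  rw [le_div_iff₀ (by linarith)]
  have hfrac : (1 - ε) * ((2 * n + 1) ^ 2 / (8 * t)) ≤ (1 + ε) * (ε * n) / 2 := by
    rw [← mul_div_assoc, div_le_div_iff₀ (by positivity) (by positivity)]
    nlinarith
  nlinarith

/-- Let `G` be a bipartite graph, `0 < ε < 1`, `β > 8ε⁻²`, and let the weight
function `w` (with `H` = support of `w`) be a weighted EDCS(G, β, β−1).
Then `μ(H) ≥ (1 − ε)·μ(G)`. -/
theorem stmt1 {V : Type*} [Fintype V] [DecidableEq V] (G : SimpleGraph V) [DecidableRel G.Adj]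
    (hbip : G.Colorable 2)
    (ε β : ℝ) (hε0 : 0 < ε) (hε1 : ε < 1) (hβ : β > 8 * ε⁻¹ ^ 2)
    (w : Sym2 V → ℕ) (hsupp : ∀ e, w e ≠ 0 → e ∈ G.edgeSet)
    (hP1 : ∀ u v : V, G.Adj u v → w s(u, v) ≠ 0 →
      (wdeg G w u + wdeg G w v : ℝ) ≤ β)
    (hP2 : ∀ u v : V, G.Adj u v → (wdeg G w u + wdeg G w v : ℝ) ≥ β - 1) :
    (nuSet {e | e ∈ G.edgeSet ∧ w e ≠ 0} : ℝ) ≥ (1 - ε) * nuSet G.edgeSet := by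
  obtain ⟨col⟩ := hbip
  set L : Finset V := univ.filter fun v => col v = 0 with hL
  have hside : ∀ u v, G.Adj u v → (u ∈ L ↔ v ∉ L) := by
    intro u v huv
    have hne := col.valid huv
    simp only [hL, mem_filter, mem_univ, true_and]
    omega
  set W : V → V → ℕ := fun u v => if u ∈ L ∧ v ∉ L then w s(u, v) else 0 with hW
  have hWne : ∀ u v, W u v ≠ 0 → u ∈ L ∧ v ∉ L ∧ w s(u, v) ≠ 0 := by
    intro u v h
    simp only [hW] at h
    split_ifs at h with h'
    · exact ⟨h'.1, h'.2, h⟩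
    · exact absurd rfl h
  have hzero : ∀ u v, ¬ G.Adj u v → w s(u, v) = 0 := fun u v h => by
    by_contra hne
    exact h (hsupp _ hne)
  have hrow : ∀ u ∈ L, ∑ v, W u v = wdeg G w u := by
    intro u hu
    refine (sum_subset_zero_on_sdiff (subset_univ _) ?_ ?_).symm
    · intro v hv
      have hadj : ¬ G.Adj u v := by simpa using hv
      simp [hW, hzero u v hadj]
    · intro v hv
      have hadj : G.Adj u v := by simpa using hv
      simp [hW, hu, (hside u v hadj).1 hu]
  have hcol : ∀ v, v ∉ L → ∑ u, W u v = wdeg G w v := by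
    intro v hv
    refine (sum_subset_zero_on_sdiff (subset_univ _) ?_ ?_).symm
    · intro u hu
      have hadj : ¬ G.Adj u v := by simpa [G.adj_comm] using hu
      simp [hW, hzero u v hadj]
    · intro u hu
      have hadj : G.Adj u v := by simpa [G.adj_comm] using hu
      simp [hW, hv, (hside u v hadj).2 hv, Sym2.eq_swap]
  have hβ0 : 0 ≤ β := le_trans (by positivity) hβ.le
  obtain ⟨T, hT, hTB, hK⟩ :=
    exists_threshold_window hε0 hε1 (hβ.lt.trans (Nat.lt_floor_add_one β))
  set B := ⌊β⌋₊ with hB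
  obtain ⟨θ, hθ⟩ := exists_threshold_card_le W hT hTB (fun u v h => by
    obtain ⟨hu, hv, hne⟩ := hWne u v h
    rw [hrow u hu, hcol v hv]
    exact Nat.le_floor (by exact_mod_cast hP1 u v (hsupp _ hne) hne)) hK
  have hcover : nuSet G.edgeSet ≤ (univ.filter fun u => θ ≤ ∑ v, W u v).card +
      (univ.filter fun v => B ≤ ∑ u, W u v + θ).card := by
    refine le_trans (nuSet_le_card_of_cover _ _ ?_) (card_union_le _ _)
    have hdir : ∀ u v, G.Adj u v → u ∈ L → θ ≤ ∑ v', W u v' ∨ B ≤ ∑ u', W u' v + θ := by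
      intro u v huv hu
      rw [hrow u hu, hcol v ((hside u v huv).1 hu)]
      have h1 := hP2 u v huv
      have h2 : (B : ℝ) ≤ β := Nat.floor_le hβ0
      have h3 : B ≤ wdeg G w u + wdeg G w v + 1 := by
        have : (B : ℝ) ≤ wdeg G w u + wdeg G w v + 1 := by linarith
        exact_mod_cast this
      omega
    intro e
    induction e using Sym2.ind with | _ u v => ?_
    intro he
    have huv : G.Adj u v := he
    by_cases hu : u ∈ L
    · rcases hdir u v huv hu with h | h
      · exact ⟨u, by simp [h], by simp⟩
      · exact ⟨v, by simp [h], by simp⟩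
    · have hv : v ∈ L := (hside v u huv.symm).2 hu
      rcases hdir v u huv.symm hv with h | h
      · exact ⟨v, by simp [h], by simp⟩
      · exact ⟨u, by simp [h], by simp⟩
  obtain ⟨M, f, hM, hf, hinj⟩ := exists_matching_of_fractional
    (fun u v => (W u v : ℝ) / (max (∑ v', W u v') (∑ u', W u' v) : ℕ))
    (fun u v => by positivity)
    (fun u => by
      calc _ ≤ ∑ v, (W u v : ℝ) / (∑ v', W u v' : ℕ) := by
            refine sum_le_sum fun v _ => ?_
            rcases Nat.eq_zero_or_pos (W u v) with h0 | h0
            · simp [h0]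
            · have : W u v ≤ ∑ v', W u v' :=
                single_le_sum (f := W u) (fun _ _ => Nat.zero_le _) (mem_univ v)
              have : (0 : ℝ) < (∑ v', W u v' : ℕ) := by exact_mod_cast h0.trans_le this
              gcongr
              exact le_max_left _ _
        _ ≤ 1 := by
            rw [← sum_div, ← Nat.cast_sum]
            exact div_self_le_one _)
    (fun v => by
      calc _ ≤ ∑ u, (W u v : ℝ) / (∑ u', W u' v : ℕ) := by
            refine sum_le_sum fun u _ => ?_
            rcases Nat.eq_zero_or_pos (W u v) with h0 | h0
            · simp [h0]
            · have : W u v ≤ ∑ u', W u' v :=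
                single_le_sum (f := fun u => W u v) (fun _ _ => Nat.zero_le _) (mem_univ u)
              have : (0 : ℝ) < (∑ u', W u' v : ℕ) := by exact_mod_cast h0.trans_le this
              gcongr
              exact le_max_right _ _
        _ ≤ 1 := by
            rw [← sum_div, ← Nat.cast_sum]
            exact div_self_le_one _)
  have hmatch : M.card ≤ nuSet {e | e ∈ G.edgeSet ∧ w e ≠ 0} := by
    refine card_le_nuSet_of_injOn _ L M f (fun u hu => ?_) hinj
    obtain ⟨v, hv, hfv⟩ := hf u hu
    have hWuv : W u v ≠ 0 := fun h => hv (by simp [h])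
    obtain ⟨hu', hv', hne⟩ := hWne u v hWuv
    exact ⟨v, ⟨hu', hv', hsupp _ hne, hne⟩, hfv⟩
  have hNpos : (0 : ℝ) < (B / 2 + 1 - T : ℕ) := by
    exact_mod_cast (by omega : 0 < B / 2 + 1 - T)
  have hcover' : (nuSet G.edgeSet : ℝ) ≤ (univ.filter fun u => θ ≤ ∑ v, W u v).card +
      (univ.filter fun v => B ≤ ∑ u, W u v + θ).card := by exact_mod_cast hcover
  have hmatch' : (M.card : ℝ) ≤ nuSet {e | e ∈ G.edgeSet ∧ w e ≠ 0} := by exact_mod_cast hmatch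
  have hε : 0 < 1 - ε := by linarith
  rw [div_mul_eq_mul_div, mul_div_assoc] at hθ
  have hθ' := (mul_le_mul_iff_right₀ hNpos).1 hθ
  rw [le_div_iff₀ hε] at hθ'
  nlinarith
end

section
/- Let a graph contain disjoint vertex sets U and V with |U| = c·|V| for some real c > 0, such that every edge incident to a vertex of U has its other endpoint in V (edges incident to V may go elsewhere). Let d(v) denote the degree of vertex v, and suppose that for every edge (u,v) of the graph, d(u) + d(v) ≤ Δ, where Δ is a positive integer. Then the sum of the degrees of the vertices of U is at most Δ·|U|/(c+1); equivalently, the average degree of the vertices of U is at most Δ/(c+1). -/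
/-- If every neighbour of `u` lies in `W`, the degree of `u` is the row sum over `W` of the
adjacency indicator. -/
theorem SimpleGraph.degree_eq_sum_indicator {V : Type*} [Fintype V] [DecidableEq V]
    (G : SimpleGraph V) [DecidableRel G.Adj] {W : Finset V} {u : V}
    (h : ∀ v, G.Adj u v → v ∈ W) :
    (G.degree u : ℝ) = ∑ w ∈ W, if G.Adj u w then (1 : ℝ) else 0 := by
  rw [Finset.sum_boole, ← G.card_neighborFinset_eq_degree]
  congr 2
  ext v
  simpa using h v

/-- The number of neighbours of `w` inside `U` is at most the degree of `w`. -/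
theorem SimpleGraph.sum_indicator_le_degree {V : Type*} [Fintype V] [DecidableEq V]
    (G : SimpleGraph V) [DecidableRel G.Adj] (U : Finset V) (w : V) :
    (∑ u ∈ U, if G.Adj u w then (1 : ℝ) else 0) ≤ G.degree w := by
  rw [Finset.sum_boole, ← G.card_neighborFinset_eq_degree]
  gcongr
  intro v hv
  simpa [G.adj_comm] using (Finset.mem_filter.mp hv).2

/-- If `U` and `W` are disjoint vertex sets with `|U| = c·|W|` (`c > 0`),
every edge incident to `U` has its other endpoint in `W`, and every edge `(u,v)` of the graph
satisfies `d(u) + d(v) ≤ Δ`, then the total degree of `U` is at most `Δ·|U|/(c+1)`. -/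
theorem stmt3 {V : Type*} [Fintype V] [DecidableEq V] (G : SimpleGraph V) [DecidableRel G.Adj]
    (U W : Finset V) (hdisj : Disjoint U W)
    (c : ℝ) (hc : 0 < c) (hcard : (U.card : ℝ) = c * W.card)
    (hedge : ∀ u v : V, G.Adj u v → u ∈ U → v ∈ W)
    (Δ : ℕ) (hΔ : 0 < Δ)
    (hdeg : ∀ u v : V, G.Adj u v → G.degree u + G.degree v ≤ Δ) :
    (∑ u ∈ U, (G.degree u : ℝ)) ≤ Δ * U.card / (c + 1) := by
  set a : V → V → ℝ := fun u w => if G.Adj u w then 1 else 0 with ha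
  set e : V → ℝ := fun w => ∑ u ∈ U, a u w
  set m : ℝ := ∑ u ∈ U, (G.degree u : ℝ) with hm
  have hd : ∀ u ∈ U, (G.degree u : ℝ) = ∑ w ∈ W, a u w := fun u hu =>
    G.degree_eq_sum_indicator fun v hv => hedge u v hv hu
  have hme : m = ∑ w ∈ W, e w := by
    rw [hm, Finset.sum_congr rfl hd, Finset.sum_comm]
  have hsq : ∑ u ∈ U, (G.degree u : ℝ) ^ 2 + ∑ w ∈ W, e w ^ 2 ≤ Δ * m := by
    have hrow : ∑ u ∈ U, (G.degree u : ℝ) ^ 2 =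
        ∑ u ∈ U, ∑ w ∈ W, a u w * G.degree u :=
      Finset.sum_congr rfl fun u hu => by rw [← Finset.sum_mul, ← hd u hu, sq]
    have hcol : ∑ w ∈ W, e w ^ 2 = ∑ u ∈ U, ∑ w ∈ W, a u w * e w := by
      rw [Finset.sum_comm]
      exact Finset.sum_congr rfl fun w _ => by rw [← Finset.sum_mul, sq]
    rw [hrow, hcol, ← Finset.sum_add_distrib, hm, Finset.mul_sum]
    refine Finset.sum_le_sum fun u hu => ?_
    rw [hd u hu, ← Finset.sum_add_distrib, Finset.mul_sum, ← hd u hu]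
    refine Finset.sum_le_sum fun w _ => ?_
    by_cases h : G.Adj u w
    · have hew : e w ≤ G.degree w := G.sum_indicator_le_degree U w
      have huw : (G.degree u : ℝ) + G.degree w ≤ Δ := mod_cast hdeg u w h
      simp only [ha, h, if_true]
      linarith
    · simp [ha, h]
  have hU : m ^ 2 ≤ U.card * ∑ u ∈ U, (G.degree u : ℝ) ^ 2 := sq_sum_le_card_mul_sum_sq
  have hW : m ^ 2 ≤ W.card * ∑ w ∈ W, e w ^ 2 := hme ▸ sq_sum_le_card_mul_sum_sq
  have hm0 : 0 ≤ m := Finset.sum_nonneg fun _ _ => Nat.cast_nonneg _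
  rw [le_div_iff₀ (by linarith)]
  rcases hm0.eq_or_lt' with h0 | hpos
  · rw [h0, zero_mul]
    exact mul_nonneg (Nat.cast_nonneg _) (Nat.cast_nonneg _)
  · refine le_of_mul_le_mul_right ?_ hpos
    calc m * (c + 1) * m = m ^ 2 + c * m ^ 2 := by ring
      _ ≤ U.card * ∑ u ∈ U, (G.degree u : ℝ) ^ 2 + c * (W.card * ∑ w ∈ W, e w ^ 2) := by gcongr
      _ = U.card * (∑ u ∈ U, (G.degree u : ℝ) ^ 2 + ∑ w ∈ W, e w ^ 2) := by rw [hcard]; ring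
      _ ≤ U.card * (Δ * m) := by gcongr
      _ = Δ * U.card * m := by ring
end

section
/- Let G = (V, E_G) be a bipartite graph and let H = (V, E_H) be a weighted edge-degree-constrained subgraph EDCS(G, β, β−1). Let P be a path in G with endpoints s and t, let L(P) denote the number of vertices of P, and suppose that L(P) is even and that every even-numbered edge of P (the second edge, the fourth edge, and so on) belongs to H. Then d_H(s) + d_H(t) ≥ β − 1 − (L(P) − 2)/2. -/
/-- If consecutive pairs `(2i, 2i+1)` have sum at least `β - 1` and consecutive pairs
`(2i+1, 2i+2)` have sum at most `β`, then the alternating sum bounds the sum of the ends. -/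
theorem sub_le_add_of_alternating_bounds (d : ℕ → ℝ) (β : ℝ) (m : ℕ)
    (hlow : ∀ i ≤ m, β - 1 ≤ d (2 * i) + d (2 * i + 1))
    (hupp : ∀ i < m, d (2 * i + 1) + d (2 * i + 2) ≤ β) :
    β - 1 - m ≤ d 0 + d (2 * m + 1) := by
  induction m with
  | zero => simpa using hlow 0 le_rfl
  | succ m ih =>
    have hprev := ih (fun i hi => hlow i (by omega)) (fun i hi => hupp i (by omega))
    have hl := hlow (m + 1) le_rfl
    have hu := hupp m (by omega)
    rw [show 2 * (m + 1) = 2 * m + 2 by ring] at hl ⊢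
    push_cast
    linarith

/-- Let `H` (the support of the weight function `w`) be a weighted
EDCS(G, β, β−1) of a bipartite graph `G`.  Let `P` be a path in `G` with an even number
`L(P) = 2k` of vertices `p 0, …, p (2k−1)`, every even-numbered edge of which lies in `H`.
Then `d_H(s) + d_H(t) ≥ β − 1 − (L(P) − 2)/2` for the endpoints `s = p 0`, `t = p (2k−1)`. -/
theorem stmt4 {V : Type*} [Fintype V] [DecidableEq V] (G : SimpleGraph V) [DecidableRel G.Adj]
    (hbip : G.Colorable 2) (β : ℝ)
    (w : Sym2 V → ℕ) (hsupp : ∀ e, w e ≠ 0 → e ∈ G.edgeSet)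
    (hP1 : ∀ u v : V, G.Adj u v → w s(u, v) ≠ 0 →
      (wdeg G w u + wdeg G w v : ℝ) ≤ β)
    (hP2 : ∀ u v : V, G.Adj u v → (wdeg G w u + wdeg G w v : ℝ) ≥ β - 1)
    (k : ℕ) (hk : 1 ≤ k) (p : ℕ → V)
    (hadj : ∀ i, i + 1 < 2 * k → G.Adj (p i) (p (i + 1)))
    (hdist : ∀ i j, i < 2 * k → j < 2 * k → p i = p j → i = j)
    (heven : ∀ i, i % 2 = 1 → i + 1 < 2 * k → w s(p i, p (i + 1)) ≠ 0) :
    (wdeg G w (p 0) + wdeg G w (p (2 * k - 1)) : ℝ) ≥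
      β - 1 - ((2 * k : ℝ) - 2) / 2 := by
  obtain ⟨m, rfl⟩ : ∃ m, k = m + 1 := ⟨k - 1, by omega⟩
  have h := sub_le_add_of_alternating_bounds (fun i => (wdeg G w (p i) : ℝ)) β m
    (fun i hi => hP2 _ _ (hadj (2 * i) (by omega)))
    (fun i hi => hP1 _ _ (hadj (2 * i + 1) (by omega))
      (heven (2 * i + 1) (by omega) (by omega)))
  rw [show 2 * (m + 1) - 1 = 2 * m + 1 by omega]
  push_cast
  linarith
end

section
/- Let a graph have positive integer edge weights, and let the degree d(v) of a vertex v be the sum of the weights of its incident edges. Suppose the graph contains two disjoint vertex sets U and V such that every edge incident to U goes to V, where V = {v_1, ..., v_n} and U = W ∪ X with W = {w_1, ..., w_n} and |X| = c·n for some real 0 < c < 1. Suppose further that for a positive integer Δ: (Constraint 1) every edge (u,v) between U and V satisfies d(u) + d(v) ≤ Δ; and (Constraint 2) for each i = 1, ..., n, d(v_i) + d(w_i) ≥ Δ − 1. Then the sum of the degrees of vertices of X is at most Δn·c/(2+c) + n; equivalently, the average degree of the vertices of X is at most Δ/(2+c) + 1/c. -/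
/-- The weighted degree as a sum over all vertices. -/
lemma wdeg_eq_sum_ite {V : Type*} [Fintype V] [DecidableEq V] (G : SimpleGraph V)
    [DecidableRel G.Adj] (w : Sym2 V → ℕ) (v : V) :
    (wdeg G w v : ℝ) = ∑ u, if G.Adj v u then (w s(v, u) : ℝ) else 0 := by
  rw [wdeg, Nat.cast_sum, ← Finset.sum_filter]
  refine Finset.sum_congr ?_ fun _ _ => rfl
  ext u
  simp

/-- If all edges at `U` go to `T` and `f u ≤ g v` along each of them, then the degree-weighted
sum of `f` over `U` is at most that of `g` over `T`. -/
lemma sum_wdeg_mul_le {V : Type*} [Fintype V] [DecidableEq V] (G : SimpleGraph V)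
    [DecidableRel G.Adj] (w : Sym2 V → ℕ) (U T : Finset V) (f g : V → ℝ)
    (hedge : ∀ u ∈ U, ∀ v, G.Adj u v → v ∈ T) (hg : ∀ v, 0 ≤ g v)
    (hfg : ∀ u ∈ U, ∀ v, G.Adj u v → f u ≤ g v) :
    ∑ u ∈ U, (wdeg G w u : ℝ) * f u ≤ ∑ v ∈ T, (wdeg G w v : ℝ) * g v := by
  calc ∑ u ∈ U, (wdeg G w u : ℝ) * f u
      = ∑ u ∈ U, ∑ v, (if G.Adj u v then (w s(u, v) : ℝ) else 0) * f u := by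
        simp only [wdeg_eq_sum_ite, Finset.sum_mul]
    _ ≤ ∑ u ∈ U, ∑ v ∈ T, (if G.Adj v u then (w s(v, u) : ℝ) else 0) * g v := by
        refine Finset.sum_le_sum fun u hu => ?_
        rw [← Finset.sum_subset (Finset.subset_univ T)]
        · refine Finset.sum_le_sum fun v _ => ?_
          by_cases h : G.Adj u v
          · rw [if_pos h, if_pos h.symm, Sym2.eq_swap]
            exact mul_le_mul_of_nonneg_left (hfg u hu v h) (Nat.cast_nonneg _)
          · rw [if_neg h, if_neg fun h' => h h'.symm, zero_mul, zero_mul]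
        · intro v _ hv
          rw [if_neg fun h => hv (hedge u hu v h), zero_mul]
    _ = ∑ v ∈ T, ∑ u ∈ U, (if G.Adj v u then (w s(v, u) : ℝ) else 0) * g v :=
        Finset.sum_comm
    _ ≤ ∑ v ∈ T, (wdeg G w v : ℝ) * g v := by
        refine Finset.sum_le_sum fun v _ => ?_
        rw [wdeg_eq_sum_ite, Finset.sum_mul]
        refine Finset.sum_le_sum_of_subset_of_nonneg (Finset.subset_univ U) fun u _ _ => ?_
        refine mul_nonneg ?_ (hg v)
        split_ifs <;> positivity

/-- The truncated linear weight `h t = max 0 (c * τ + 2 * (t - τ))`. -/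
noncomputable def truncatedWeight (c τ t : ℝ) : ℝ := max 0 (c * τ + 2 * (t - τ))

lemma truncatedWeight_nonneg (c τ t : ℝ) : 0 ≤ truncatedWeight c τ t := le_max_left _ _

lemma truncatedWeight_mono (c τ : ℝ) : Monotone (truncatedWeight c τ) := fun s t h =>
  max_le_max le_rfl (by linarith)

/-- Tangent line bound at `τ` for `x * h x`. -/
lemma tangent_le_mul_truncatedWeight (c τ x : ℝ) (hx : 0 ≤ x) :
    c * τ ^ 2 + (2 + c) * τ * (x - τ) ≤ x * truncatedWeight c τ x := by
  have h : x * (c * τ + 2 * (x - τ)) ≤ x * truncatedWeight c τ x :=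
    mul_le_mul_of_nonneg_left (le_max_right _ _) hx
  nlinarith [sq_nonneg (x - τ)]

/-- The contribution of a pair of degrees `a`, `b` with `a + b ≥ (2 + c) * τ - 1`. -/
lemma mul_truncatedWeight_sub_le (c τ a b : ℝ) (hc0 : 0 < c) (hc1 : c < 1) (hτ : 0 < τ)
    (hb : 0 ≤ b) (hab : (2 + c) * τ - 1 ≤ a + b)
    (hint : (2 + c) * τ - a ≤ 0 ∨ 1 ≤ (2 + c) * τ - a) :
    a * truncatedWeight c τ ((2 + c) * τ - a) - b * truncatedWeight c τ b
      ≤ c ^ 2 * τ ^ 2 + (2 + c) * τ := by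
  obtain ⟨t, rfl⟩ : ∃ t, a = (2 + c) * τ - t := ⟨(2 + c) * τ - a, by ring⟩
  rw [sub_sub_cancel] at *
  have hpos : 0 ≤ c ^ 2 * τ ^ 2 + (2 + c) * τ := by positivity
  have hbh := mul_nonneg hb (truncatedWeight_nonneg c τ b)
  rcases le_total (c * τ + 2 * (t - τ)) 0 with ht | ht
  · have h0 : truncatedWeight c τ t = 0 := max_eq_left ht
    rw [h0, mul_zero]
    linarith
  · have h1 : 1 ≤ t := by
      rcases hint with h | h
      · nlinarith
      · exact h
    have hlin : truncatedWeight c τ t = c * τ + 2 * (t - τ) := max_eq_right ht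
    have hle : (t - 1) * (c * τ + 2 * (t - 1 - τ)) ≤ b * truncatedWeight c τ b :=
      calc (t - 1) * (c * τ + 2 * (t - 1 - τ))
          ≤ (t - 1) * truncatedWeight c τ (t - 1) :=
            mul_le_mul_of_nonneg_left (le_max_right _ _) (by linarith)
        _ ≤ b * truncatedWeight c τ b :=
            mul_le_mul (by linarith) (truncatedWeight_mono c τ (by linarith))
              (truncatedWeight_nonneg _ _ _) hb
    rw [hlin]
    nlinarith [sq_nonneg (t - τ), sq_nonneg (t - τ - 1)]

/-- Let a graph `G` have positive integer edge weights `w`, and let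
`U = W ∪ X` and `V' = {v_1, …, v_n}` be disjoint vertex sets with `W = {w_1, …, w_n}`,
`|X| = c·n` for some real `0 < c < 1`, such that every edge incident to `U` goes to `V'`.
If every edge `(u,v)` between `U` and `V'` satisfies `d(u) + d(v) ≤ Δ` and each pair
satisfies `d(v_i) + d(w_i) ≥ Δ − 1`, then the total degree of `X` is at most
`Δ·n·c/(2+c) + n`. -/
theorem stmt6 {V : Type*} [Fintype V] [DecidableEq V] (G : SimpleGraph V) [DecidableRel G.Adj]
    (w : Sym2 V → ℕ) (hw : ∀ e ∈ G.edgeSet, 0 < w e)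
    (n : ℕ) (vf wf : Fin n → V)
    (hvf : Function.Injective vf) (hwf : Function.Injective wf)
    (X : Finset V) (c : ℝ) (hc0 : 0 < c) (hc1 : c < 1)
    (hX : (X.card : ℝ) = c * n)
    (hWX : Disjoint (Finset.image wf Finset.univ) X)
    (hUV : Disjoint (Finset.image wf Finset.univ ∪ X) (Finset.image vf Finset.univ))
    (hedge : ∀ u v : V, G.Adj u v → u ∈ Finset.image wf Finset.univ ∪ X →
      v ∈ Finset.image vf Finset.univ)
    (Δ : ℕ) (hΔ : 0 < Δ)
    (hC1 : ∀ u v : V, G.Adj u v → u ∈ Finset.image wf Finset.univ ∪ X →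
      v ∈ Finset.image vf Finset.univ → wdeg G w u + wdeg G w v ≤ Δ)
    (hC2 : ∀ i : Fin n, Δ - 1 ≤ wdeg G w (vf i) + wdeg G w (wf i)) :
    (∑ x ∈ X, (wdeg G w x : ℝ)) ≤ Δ * n * c / (2 + c) + n := by
  obtain ⟨τ, hτ⟩ : ∃ τ : ℝ, (2 + c) * τ = Δ := ⟨Δ / (2 + c), by field_simp⟩
  have hΔ' : (0 : ℝ) < Δ := by exact_mod_cast hΔ
  have hτ0 : 0 < τ := pos_of_mul_pos_right (hτ ▸ hΔ') (by linarith)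
  have hsum := sum_wdeg_mul_le G w (Finset.image wf Finset.univ ∪ X) (Finset.image vf Finset.univ)
    (fun u => truncatedWeight c τ (wdeg G w u))
    (fun v => truncatedWeight c τ ((2 + c) * τ - wdeg G w v))
    (fun u hu v h => hedge u v h hu) (fun _ => truncatedWeight_nonneg _ _ _)
    (fun u hu v h => truncatedWeight_mono c τ (by
      have h1 : (wdeg G w u + wdeg G w v : ℝ) ≤ Δ := by
        exact_mod_cast hC1 u v h hu (hedge u v h hu)
      linarith))
  rw [Finset.sum_union hWX, Finset.sum_image hwf.injOn, Finset.sum_image hvf.injOn] at hsum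
  have hpairs : ∑ i, ((wdeg G w (vf i) : ℝ) * truncatedWeight c τ ((2 + c) * τ - wdeg G w (vf i))
      - wdeg G w (wf i) * truncatedWeight c τ (wdeg G w (wf i)))
      ≤ ∑ _i : Fin n, (c ^ 2 * τ ^ 2 + (2 + c) * τ) := by
    refine Finset.sum_le_sum fun i _ => mul_truncatedWeight_sub_le c τ _ _ hc0 hc1 hτ0
      (Nat.cast_nonneg _) ?_ ?_
    · have h : Δ ≤ wdeg G w (vf i) + wdeg G w (wf i) + 1 := by
        have := hC2 i
        omega
      have h' : (Δ : ℝ) ≤ wdeg G w (vf i) + wdeg G w (wf i) + 1 := by exact_mod_cast h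
      linarith
    · rw [hτ]
      rcases Nat.lt_or_ge (wdeg G w (vf i)) Δ with h | h
      · right
        have h' : (wdeg G w (vf i) : ℝ) + 1 ≤ Δ := by exact_mod_cast h
        linarith
      · left
        have h' : (Δ : ℝ) ≤ wdeg G w (vf i) := by exact_mod_cast h
        linarith
  have htangent : ∑ x ∈ X, (c * τ ^ 2 + (2 + c) * τ * ((wdeg G w x : ℝ) - τ))
      ≤ ∑ x ∈ X, (wdeg G w x : ℝ) * truncatedWeight c τ (wdeg G w x) :=
    Finset.sum_le_sum fun x _ => tangent_le_mul_truncatedWeight c τ _ (Nat.cast_nonneg _)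
  rw [Finset.sum_sub_distrib] at hpairs
  simp only [Finset.sum_add_distrib, ← Finset.mul_sum, Finset.sum_sub_distrib, Finset.sum_const,
    nsmul_eq_mul, hX, Finset.card_univ, Fintype.card_fin, hτ] at hpairs htangent hsum
  have hgoal : (Δ : ℝ) * n * c / (2 + c) = c * n * τ := by
    rw [← hτ]
    field_simp
  rw [hgoal]
  refine le_of_mul_le_mul_left ?_ hΔ'
  linarith
end

section
/- Let G be a bipartite graph and let H be an unweighted edge-degree-constrained subgraph EDCS(G, β, β−1). Call an edge (u,v) full if it is in H and d_H(u) + d_H(v) = β, and deficient if it is in G but not in H and d_H(u) + d_H(v) = β − 1. Then any walk in G whose edges alternate between full and deficient edges is a simple path, and its length (number of edges) is at most 2β + 1. -/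
/-- The degree of `v` in the simple graph `H`. -/
noncomputable def sdeg {V : Type*} (H : SimpleGraph V) (v : V) : ℕ :=
  (H.neighborSet v).ncard

/-- An edge of `H` is *full* if its edge degree in `H` equals `β`. -/
noncomputable def IsFullEdge {V : Type*} (H : SimpleGraph V) (β : ℕ) (u v : V) : Prop :=
  H.Adj u v ∧ sdeg H u + sdeg H v = β

/-- An edge of `G` not in `H` is *deficient* if its edge degree in `H` equals `β − 1`. -/
noncomputable def IsDeficientEdge {V : Type*} (G H : SimpleGraph V) (β : ℕ) (u v : V) : Prop :=
  G.Adj u v ∧ ¬ H.Adj u v ∧ sdeg H u + sdeg H v = β - 1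

theorem sdeg_pos_of_adj {V : Type*} [Finite V] {H : SimpleGraph V} {u v : V} (h : H.Adj u v) :
    0 < sdeg H u :=
  (Set.ncard_pos (Set.toFinite _)).2 ⟨v, h⟩

/-- A colour that changes at every step of a walk determines the parity of the position. -/
theorem color_eq_iff_mod_two_eq {k : ℕ} (c : ℕ → Fin 2) (hc : ∀ i < k, c i ≠ c (i + 1))
    {i j : ℕ} (hi : i ≤ k) (hj : j ≤ k) : c i = c j ↔ i % 2 = j % 2 := by
  have key : ∀ i ≤ k, (c i : ℕ) = ((c 0 : ℕ) + i) % 2 := by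
    intro i
    induction i with
    | zero => intro _; omega
    | succ i ih =>
      intro hi
      have h := ih (by omega)
      have hne := Fin.val_ne_of_ne (hc i (by omega))
      omega
  rw [Fin.ext_iff, key i hi, key j hj]
  omega

/-- If consecutive sums of a sequence alternate between `a` and `b`, then the even terms form an
arithmetic progression of difference `b - a` and the odd terms one of difference `a - b`. -/
theorem eq_of_alternating_sums {k : ℕ} {a b : ℤ} {d : ℕ → ℤ}
    (hd : ∀ i < k, d i + d (i + 1) = if i % 2 = 0 then a else b) (j : ℕ) :
    (2 * j ≤ k → d (2 * j) = d 0 + j * (b - a)) ∧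
      (2 * j + 1 ≤ k → d (2 * j + 1) = d 1 + j * (a - b)) := by
  induction j with
  | zero => simp
  | succ j ih =>
    have step : 2 * (j + 1) ≤ k → d (2 * (j + 1)) = d 0 + (j + 1 : ℕ) * (b - a) := by
      intro h
      have h₀ := hd (2 * j) (by omega)
      have h₁ := hd (2 * j + 1) (by omega)
      rw [if_pos (by omega)] at h₀
      rw [if_neg (by omega)] at h₁
      have := ih.1 (by omega)
      push_cast
      rw [show 2 * (j + 1) = 2 * j + 1 + 1 by ring]
      linarith
    refine ⟨step, fun h => ?_⟩
    have h₁ := hd (2 * j + 1) (by omega)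
    have h₂ := hd (2 * (j + 1)) (by omega)
    rw [if_neg (by omega)] at h₁
    rw [if_pos (by omega)] at h₂
    have := ih.2 (by omega)
    rw [show 2 * j + 1 + 1 = 2 * (j + 1) by ring] at h₁
    push_cast
    linarith

/-- A sequence whose consecutive sums alternate between two distinct values is injective on
positions of equal parity. -/
theorem injective_of_alternating_sums {k : ℕ} {a b : ℤ} {d : ℕ → ℤ} (hab : a ≠ b)
    (hd : ∀ i < k, d i + d (i + 1) = if i % 2 = 0 then a else b)
    {i j : ℕ} (hi : i ≤ k) (hj : j ≤ k) (hmod : i % 2 = j % 2) (hij : d i = d j) : i = j := by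
  rcases Nat.even_or_odd' i with ⟨m, rfl | rfl⟩ <;> rcases Nat.even_or_odd' j with ⟨n, rfl | rfl⟩
  · rw [(eq_of_alternating_sums hd m).1 hi, (eq_of_alternating_sums hd n).1 hj] at hij
    have := mul_right_cancel₀ (sub_ne_zero.2 hab.symm) (add_left_cancel hij)
    omega
  · omega
  · omega
  · rw [(eq_of_alternating_sums hd m).2 hi, (eq_of_alternating_sums hd n).2 hj] at hij
    have := mul_right_cancel₀ (sub_ne_zero.2 hab) (add_left_cancel hij)
    omega

/-- The degree sums along a walk alternating between full and deficient edges alternate between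
`β` and `β - 1`. -/
theorem exists_alternating_degree_sums {V : Type*} {G H : SimpleGraph V} {β k : ℕ} {p : ℕ → V}
    (hβ : 0 < β)
    (hFD : ∀ i < k, IsFullEdge H β (p i) (p (i + 1)) ∨
      IsDeficientEdge G H β (p i) (p (i + 1)))
    (halt : ∀ i, i + 1 < k →
      (IsFullEdge H β (p i) (p (i + 1)) →
        IsDeficientEdge G H β (p (i + 1)) (p (i + 2))) ∧
      (IsDeficientEdge G H β (p i) (p (i + 1)) →
        IsFullEdge H β (p (i + 1)) (p (i + 2)))) :
    ∃ a b : ℤ, (a - b = 1 ∨ b - a = 1) ∧ ∀ i < k,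
      (sdeg H (p i) : ℤ) + sdeg H (p (i + 1)) = if i % 2 = 0 then a else b := by
  have sums : ∀ i < k, IsFullEdge H β (p i) (p (i + 1)) ∧
      (sdeg H (p i) : ℤ) + sdeg H (p (i + 1)) = β ∨
      IsDeficientEdge G H β (p i) (p (i + 1)) ∧
      (sdeg H (p i) : ℤ) + sdeg H (p (i + 1)) = β - 1 := by
    intro i hi
    rcases hFD i hi with h | h
    · exact Or.inl ⟨h, by have := h.2; omega⟩
    · exact Or.inr ⟨h, by have := h.2.2; omega⟩
  have step : ∀ i, i + 1 < k →
      ((sdeg H (p i) : ℤ) + sdeg H (p (i + 1))) +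
        ((sdeg H (p (i + 1)) : ℤ) + sdeg H (p (i + 2))) = 2 * β - 1 := by
    intro i hi
    rcases sums i (by omega) with ⟨h, e⟩ | ⟨h, e⟩
    · have := ((halt i hi).1 h).2.2
      omega
    · have := ((halt i hi).2 h).2
      omega
  obtain ⟨a, ha, h₀⟩ : ∃ a : ℤ, (a = β ∨ a = β - 1) ∧
      (0 < k → (sdeg H (p 0) : ℤ) + sdeg H (p 1) = a) := by
    rcases Nat.eq_zero_or_pos k with hk | hk
    · exact ⟨β, Or.inl rfl, fun h => by omega⟩
    · exact ⟨_, (sums 0 hk).imp And.right And.right, fun _ => rfl⟩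
  refine ⟨a, 2 * β - 1 - a, by omega, fun i => ?_⟩
  induction i with
  | zero => simpa using h₀
  | succ i ih =>
    intro hi
    have h := ih (by omega)
    have := step i hi
    rw [show i + 1 + 1 = i + 2 by ring]
    split_ifs at h ⊢ <;> omega

/-- Let `H` be an unweighted EDCS(G, β, β−1) of a bipartite graph `G`.
Any walk in `G` whose edges alternate between full and deficient edges is a simple path
of length at most `2β + 1`. -/
theorem stmt7 {V : Type*} [Fintype V] (G H : SimpleGraph V)
    (hbip : G.Colorable 2) (hHG : H ≤ G) (β : ℕ)
    (hP1 : ∀ u v : V, H.Adj u v → sdeg H u + sdeg H v ≤ β)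
    (hP2 : ∀ u v : V, G.Adj u v → ¬ H.Adj u v → β - 1 ≤ sdeg H u + sdeg H v)
    (k : ℕ) (p : ℕ → V)
    (hadj : ∀ i < k, G.Adj (p i) (p (i + 1)))
    (hFD : ∀ i < k, IsFullEdge H β (p i) (p (i + 1)) ∨
      IsDeficientEdge G H β (p i) (p (i + 1)))
    (halt : ∀ i, i + 1 < k →
      (IsFullEdge H β (p i) (p (i + 1)) →
        IsDeficientEdge G H β (p (i + 1)) (p (i + 2))) ∧
      (IsDeficientEdge G H β (p i) (p (i + 1)) →
        IsFullEdge H β (p (i + 1)) (p (i + 2)))) :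
    (∀ i ≤ k, ∀ j ≤ k, p i = p j → i = j) ∧ k ≤ 2 * β + 1 := by
  obtain ⟨c⟩ := hbip
  have parity : ∀ i ≤ k, ∀ j ≤ k, p i = p j → i % 2 = j % 2 := fun i hi j hj hij =>
    (color_eq_iff_mod_two_eq (fun i => c (p i)) (fun i hi => c.valid (hadj i hi)) hi hj).1
      (congrArg c hij)
  rcases Nat.eq_zero_or_pos β with rfl | hβ
  · have not_full : ∀ u v, ¬ IsFullEdge H 0 u v := by
      intro u v h
      have := sdeg_pos_of_adj h.1
      have := h.2
      omega
    have hk : k ≤ 1 := by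
      by_contra! hk
      exact not_full _ _ ((halt 0 hk).2 ((hFD 0 (by omega)).resolve_left (not_full _ _)))
    refine ⟨fun i hi j hj hij => ?_, by omega⟩
    have := parity i hi j hj hij
    omega
  · obtain ⟨a, b, hab, hd⟩ := exists_alternating_degree_sums hβ hFD halt
    refine ⟨fun i hi j hj hij => injective_of_alternating_sums (d := fun i => (sdeg H (p i) : ℤ))
      (by omega) hd hi hj (parity i hi j hj hij) (by simp only [hij]), ?_⟩
    by_contra! hk
    have le_β : ∀ i < k, sdeg H (p i) + sdeg H (p (i + 1)) ≤ β := by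
      intro i hi
      rcases hFD i hi with h | h
      · exact h.2.le
      · exact h.2.2.le.trans (Nat.sub_le _ _)
    have h₀ := le_β 0 (by omega)
    have h₁ := le_β (2 * β + 1) (by omega)
    have h := (eq_of_alternating_sums (d := fun i => (sdeg H (p i) : ℤ)) hd (β + 1)).1 (by omega)
    rw [show 2 * β + 1 + 1 = 2 * (β + 1) by ring] at h₁
    have hba : b - a = 1 ∨ b - a = -1 := by omega
    rcases hba with e | e <;> simp only [e] at h <;> push_cast at h <;> omega
end

section
/- Let G be a bipartite graph, let 0 < λ < 1 with ℓ := βλ/6 a positive integer, and let H be an unweighted edge-degree-constrained subgraph EDCS(G, β, β(1−λ)). Call an edge (u,v) full if it is in H and d_H(u) + d_H(v) = β, and augmentable if it is in G but not in H and β(1−λ) ≤ d_H(u) + d_H(v) ≤ β(1−λ) + 5ℓ. Then any walk in G whose edges alternate between full and augmentable edges is a simple path, and its length (number of edges) is at most 12/λ + 1. -/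
/-- An edge of `G` not in `H` is *augmentable* if its edge degree in `H` lies between
`β(1−λ)` and `β(1−λ) + 5ℓ`, where `ℓ = βλ/6`. -/
noncomputable def IsAugmentableEdge {V : Type*} (G H : SimpleGraph V) (β : ℕ) (lam : ℝ)
    (ℓ : ℕ) (u v : V) : Prop :=
  G.Adj u v ∧ ¬ H.Adj u v ∧
    (β : ℝ) * (1 - lam) ≤ (sdeg H u + sdeg H v : ℝ) ∧
    (sdeg H u + sdeg H v : ℝ) ≤ (β : ℝ) * (1 - lam) + 5 * ℓ

/-- If full steps (`F`, degree sum `β`) and augmentable steps (`A`, degree sum at most `β - ℓ`)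
alternate, then every second degree after a full step drops by at least `ℓ` each time. -/
theorem add_mul_le_of_full {d : ℕ → ℕ} {F A : ℕ → Prop} {β ℓ k : ℕ}
    (hF : ∀ i, F i → d i + d (i + 1) = β) (hA : ∀ i, A i → d i + d (i + 1) + ℓ ≤ β)
    (halt : ∀ i, i + 1 < k → (F i → A (i + 1)) ∧ (A i → F (i + 1)))
    {i : ℕ} (hi : F i) (m : ℕ) (hm : i + 2 * m ≤ k) :
    (i + 2 * m < k → F (i + 2 * m)) ∧ d (i + 2 * m) + m * ℓ ≤ d i := by
  induction m with
  | zero => exact ⟨fun _ => hi, by simp⟩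
  | succ m ih =>
    obtain ⟨h₁, h₂⟩ := ih (by omega)
    have hf := h₁ (by omega)
    have ha := (halt _ (by omega)).1 hf
    have hs := hF _ hf
    have ht := hA _ ha
    rw [show i + 2 * (m + 1) = i + 2 * m + 1 + 1 by ring]
    refine ⟨fun h => (halt _ h).2 ha, ?_⟩
    rw [add_mul]
    omega

/-- If full steps (`F`, degree sum `β`) and augmentable steps (`A`, degree sum at most `β - ℓ`)
alternate, then every second degree after an augmentable step grows by at least `ℓ` each time. -/
theorem add_mul_le_of_augmentable {d : ℕ → ℕ} {F A : ℕ → Prop} {β ℓ k : ℕ}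
    (hF : ∀ i, F i → d i + d (i + 1) = β) (hA : ∀ i, A i → d i + d (i + 1) + ℓ ≤ β)
    (halt : ∀ i, i + 1 < k → (F i → A (i + 1)) ∧ (A i → F (i + 1)))
    {i : ℕ} (hi : A i) (m : ℕ) (hm : i + 2 * m ≤ k) :
    (i + 2 * m < k → A (i + 2 * m)) ∧ d i + m * ℓ ≤ d (i + 2 * m) := by
  induction m with
  | zero => exact ⟨fun _ => hi, by simp⟩
  | succ m ih =>
    obtain ⟨h₁, h₂⟩ := ih (by omega)
    have ha := h₁ (by omega)
    have hf := (halt _ (by omega)).2 ha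
    have hs := hF _ hf
    have ht := hA _ ha
    rw [show i + 2 * (m + 1) = i + 2 * m + 1 + 1 by ring]
    refine ⟨fun h => (halt _ h).1 hf, ?_⟩
    rw [add_mul]
    omega

/-- Along a walk, a proper 2-colouring takes the same colour at even distance. -/
theorem SimpleGraph.Coloring.eq_add_two_mul {V : Type*} {G : SimpleGraph V}
    (c : G.Coloring (Fin 2)) {p : ℕ → V} {k : ℕ}
    (hadj : ∀ i < k, G.Adj (p i) (p (i + 1))) (i m : ℕ) (hm : i + 2 * m ≤ k) :
    c (p (i + 2 * m)) = c (p i) := by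
  induction m with
  | zero => rfl
  | succ m ih =>
    have h₁ := c.valid (hadj (i + 2 * m) (by omega))
    have h₂ := c.valid (hadj (i + 2 * m + 1) (by omega))
    have h₃ := ih (by omega)
    rw [show i + 2 * (m + 1) = i + 2 * m + 1 + 1 by ring]
    omega

/-- Let `H` be an unweighted EDCS(G, β, β(1−λ)) of a bipartite graph `G`,
with `0 < λ < 1` and `ℓ = βλ/6` a positive integer.  Any walk in `G` whose edges alternate
between full and augmentable edges is a simple path of length at most `12/λ + 1`. -/
theorem stmt8 {V : Type*} [Fintype V] (G H : SimpleGraph V)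
    (hbip : G.Colorable 2) (hHG : H ≤ G)
    (β : ℕ) (lam : ℝ) (hlam0 : 0 < lam) (hlam1 : lam < 1)
    (ℓ : ℕ) (hℓpos : 0 < ℓ) (hℓ : (ℓ : ℝ) = β * lam / 6)
    (hP1 : ∀ u v : V, H.Adj u v → sdeg H u + sdeg H v ≤ β)
    (hP2 : ∀ u v : V, G.Adj u v → ¬ H.Adj u v →
      (β : ℝ) * (1 - lam) ≤ (sdeg H u + sdeg H v : ℝ))
    (k : ℕ) (p : ℕ → V)
    (hadj : ∀ i < k, G.Adj (p i) (p (i + 1)))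
    (hFD : ∀ i < k, IsFullEdge H β (p i) (p (i + 1)) ∨
      IsAugmentableEdge G H β lam ℓ (p i) (p (i + 1)))
    (halt : ∀ i, i + 1 < k →
      (IsFullEdge H β (p i) (p (i + 1)) →
        IsAugmentableEdge G H β lam ℓ (p (i + 1)) (p (i + 2))) ∧
      (IsAugmentableEdge G H β lam ℓ (p i) (p (i + 1)) →
        IsFullEdge H β (p (i + 1)) (p (i + 2)))) :
    (∀ i ≤ k, ∀ j ≤ k, p i = p j → i = j) ∧ (k : ℝ) ≤ 12 / lam + 1 := by
  obtain ⟨c⟩ := hbip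
  have hF : ∀ i, IsFullEdge H β (p i) (p (i + 1)) →
      sdeg H (p i) + sdeg H (p (i + 1)) = β := fun i h => h.2
  have hA : ∀ i, IsAugmentableEdge G H β lam ℓ (p i) (p (i + 1)) →
      sdeg H (p i) + sdeg H (p (i + 1)) + ℓ ≤ β := by
    intro i h
    have h' := h.2.2.2
    have : ((sdeg H (p i) + sdeg H (p (i + 1)) + ℓ : ℕ) : ℝ) ≤ β := by
      push_cast
      linarith
    exact_mod_cast this
  have hfull := fun i => add_mul_le_of_full (d := fun i => sdeg H (p i)) hF hA halt (i := i)
  have haug := fun i => add_mul_le_of_augmentable (d := fun i => sdeg H (p i)) hF hA halt (i := i)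
  have hne : ∀ i j, i < j → j ≤ k → p i ≠ p j := by
    intro i j hij hj h
    obtain ⟨m, rfl | rfl⟩ : ∃ m, j = i + 2 * m ∨ j = i + 2 * m + 1 :=
      ⟨(j - i) / 2, by omega⟩
    · have hpos : 0 < m * ℓ := Nat.mul_pos (by omega) hℓpos
      rcases hFD i (by omega) with hi | hi
      · have := (hfull i hi m hj).2
        simp only [← h] at this
        omega
      · have := (haug i hi m hj).2
        simp only [← h] at this
        omega
    · have h₁ := c.valid (hadj (i + 2 * m) (by omega))
      rw [c.eq_add_two_mul hadj i m (by omega), ← h] at h₁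
      exact h₁ rfl
  refine ⟨fun i hi j hj h => ?_, ?_⟩
  · rcases lt_trichotomy i j with hij | hij | hij
    · exact (hne i j hij hj h).elim
    · exact hij
    · exact (hne j i hij hi h.symm).elim
  · have hβ : (0 : ℝ) < β := by
      have : (0 : ℝ) < ℓ := by exact_mod_cast hℓpos
      by_contra hβ
      nlinarith
    have hmul : k / 2 * ℓ ≤ β := by
      rcases Nat.eq_zero_or_pos k with rfl | hk
      · simp
      have hle : ∀ i < k, sdeg H (p i) + sdeg H (p (i + 1)) ≤ β := fun i hi =>
        (hFD i hi).elim (fun h => (hF i h).le) fun h => (Nat.le_add_right _ _).trans (hA i h)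
      rcases hFD 0 hk with h | h
      · have h₁ := (hfull 0 h (k / 2) (by omega)).2
        have h₂ := hle 0 hk
        omega
      · have h₁ := (haug 0 h (k / 2) (by omega)).2
        rcases Nat.eq_zero_or_pos (k / 2) with h0 | hpos
        · simp [h0]
        · have h₂ := hle (0 + 2 * (k / 2) - 1) (by omega)
          rw [show 0 + 2 * (k / 2) - 1 + 1 = 0 + 2 * (k / 2) by omega] at h₂
          omega
    have hhalf : ((k / 2 : ℕ) : ℝ) * lam ≤ 6 := by
      have h : ((k / 2 : ℕ) : ℝ) * ℓ ≤ β := by exact_mod_cast hmul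
      rw [hℓ] at h
      refine le_of_mul_le_mul_right ?_ hβ
      linarith
    have hk : (k : ℝ) ≤ 2 * ((k / 2 : ℕ) : ℝ) + 1 := by
      exact_mod_cast (by omega : k ≤ 2 * (k / 2) + 1)
    have := (le_div_iff₀ hlam0).2 hhalf
    have h12 : 12 / lam = 2 * (6 / lam) := by ring
    linarith
end

section
/- Let G be a bipartite graph with bipartition (L, R) and let M be a maximum matching in G. Let P_L* be the set of M-free vertices of L, let P_L (respectively P_R) be the set of M-matched vertices of L (respectively R) reachable from P_L* by an M-alternating path starting with a non-matching edge, let Q_R* be the set of M-free vertices of R, and let Q_R be the set of M-matched vertices of R not reachable from P_L* by such a path. Then G contains no edge between P_L* ∪ P_L and Q_R* ∪ Q_R. -/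
/-- A vertex is `M`-free if it lies on no edge of the matching `M`. -/
def MFree {V : Type*} (M : Finset (Sym2 V)) (v : V) : Prop :=
  ∀ e ∈ M, v ∉ e

/-- `v` is reachable from a free vertex of `L` by an `M`-alternating path that starts
with a non-matching edge (edges at even positions are outside `M`, edges at odd
positions are in `M`). -/
def AltReach {V : Type*} (G : SimpleGraph V) (L : Set V) (M : Finset (Sym2 V)) (v : V) :
    Prop :=
  ∃ (k : ℕ) (p : ℕ → V), p 0 ∈ L ∧ MFree M (p 0) ∧ p k = v ∧
    (∀ i < k, G.Adj (p i) (p (i + 1))) ∧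
    (∀ i < k, (s(p i, p (i + 1)) ∈ M ↔ i % 2 = 1)) ∧
    (∀ i ≤ k, ∀ j ≤ k, p i = p j → i = j)

/-- The edges in `M` are edges of `G` and are pairwise disjoint. -/
def IsEdgeMatching {V : Type*} (G : SimpleGraph V) (M : Finset (Sym2 V)) : Prop :=
  ↑M ⊆ G.edgeSet ∧ ∀ e ∈ M, ∀ f ∈ M, e ≠ f → ∀ v : V, v ∈ e → v ∉ f

theorem IsEdgeMatching.insert_free {V : Type*} [DecidableEq V] {G : SimpleGraph V}
    {M : Finset (Sym2 V)} (hM : IsEdgeMatching G M) {a b : V} (hab : G.Adj a b)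
    (ha : MFree M a) (hb : MFree M b) : IsEdgeMatching G (insert s(a, b) M) := by
  have hdisj : ∀ f ∈ M, ∀ v ∈ s(a, b), v ∉ f := by
    intro f hf v hv
    rcases Sym2.mem_iff.1 hv with rfl | rfl
    exacts [ha f hf, hb f hf]
  refine ⟨?_, ?_⟩
  · rw [Finset.coe_insert]
    exact Set.insert_subset hab hM.1
  · intro e he f hf hne v hve hvf
    rcases Finset.mem_insert.1 he with rfl | he <;> rcases Finset.mem_insert.1 hf with rfl | hf
    · exact hne rfl
    · exact hdisj f hf v hve hvf
    · exact hdisj e he v hvf hve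
    · exact hM.2 e he f hf hne v hve hvf

theorem IsEdgeMatching.erase {V : Type*} [DecidableEq V] {G : SimpleGraph V}
    {M : Finset (Sym2 V)} (hM : IsEdgeMatching G M) (e : Sym2 V) :
    IsEdgeMatching G (M.erase e) :=
  ⟨fun _ hf => hM.1 (Finset.mem_of_mem_erase hf), fun _ he _ hf =>
    hM.2 _ (Finset.mem_of_mem_erase he) _ (Finset.mem_of_mem_erase hf)⟩

theorem IsEdgeMatching.free_erase {V : Type*} [DecidableEq V] {G : SimpleGraph V}
    {M : Finset (Sym2 V)} (hM : IsEdgeMatching G M) {e : Sym2 V} (he : e ∈ M) {v : V}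
    (hv : v ∈ e) : MFree (M.erase e) v :=
  fun _ hf => hM.2 e he _ (Finset.mem_of_mem_erase hf) (Finset.ne_of_mem_erase hf).symm v hv

theorem MFree.erase {V : Type*} [DecidableEq V] {M : Finset (Sym2 V)} {v : V}
    (hv : MFree M v) (e : Sym2 V) : MFree (M.erase e) v :=
  fun f hf => hv f (Finset.mem_of_mem_erase hf)

theorem MFree.insert_edge {V : Type*} [DecidableEq V] {M : Finset (Sym2 V)} {v a b : V}
    (hv : MFree M v) (ha : v ≠ a) (hb : v ≠ b) : MFree (insert s(a, b) M) v := by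
  intro f hf
  rcases Finset.mem_insert.1 hf with rfl | hf
  · simp [ha, hb]
  · exact hv f hf

theorem MFree.card_insert {V : Type*} [DecidableEq V] {M : Finset (Sym2 V)} {a : V}
    (ha : MFree M a) (b : V) : (insert s(a, b) M).card = M.card + 1 :=
  Finset.card_insert_of_notMem fun h => ha _ h (Sym2.mem_mk_left a b)

/-- A matching with an augmenting path is not maximum. -/
theorem IsEdgeMatching.exists_card_eq_add_one {V : Type*} {G : SimpleGraph V} (m : ℕ)
    {M : Finset (Sym2 V)} (hM : IsEdgeMatching G M) {p : ℕ → V} (hfirst : MFree M (p 0))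
    (hlast : MFree M (p (2 * m + 1))) (hadj : ∀ i < 2 * m + 1, G.Adj (p i) (p (i + 1)))
    (halt : ∀ i < 2 * m + 1, (s(p i, p (i + 1)) ∈ M ↔ i % 2 = 1))
    (hinj : ∀ i ≤ 2 * m + 1, ∀ j ≤ 2 * m + 1, p i = p j → i = j) :
    ∃ M', IsEdgeMatching G M' ∧ M'.card = M.card + 1 := by
  classical
  induction m generalizing M p with
  | zero => exact ⟨_, hM.insert_free (hadj 0 (by omega)) hfirst hlast, hfirst.card_insert _⟩
  | succ m ih =>
    have hne : ∀ i ≤ 2 * (m + 1) + 1, ∀ j ≤ 2 * (m + 1) + 1, i ≠ j → p i ≠ p j :=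
      fun i hi j hj hij h => hij (hinj i hi j hj h)
    have hmem : s(p 1, p 2) ∈ M := (halt 1 (by omega)).2 rfl
    have hfree0 := hfirst.erase s(p 1, p 2)
    have hM' := (hM.erase s(p 1, p 2)).insert_free (hadj 0 (by omega)) hfree0
      (hM.free_erase hmem (Sym2.mem_mk_left _ _))
    have hcard : (insert s(p 0, p 1) (M.erase s(p 1, p 2))).card = M.card := by
      rw [hfree0.card_insert, Finset.card_erase_add_one hmem]
    rw [← hcard]
    refine ih (p := fun i => p (i + 2)) hM' ?_ ?_ ?_ ?_ ?_
    · exact (hM.free_erase hmem (Sym2.mem_mk_right _ _)).insert_edge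
        (hne 2 (by omega) 0 (by omega) (by omega)) (hne 2 (by omega) 1 (by omega) (by omega))
    · exact (hlast.erase _).insert_edge (hne _ (by omega) 0 (by omega) (by omega))
        (hne _ (by omega) 1 (by omega) (by omega))
    · exact fun i hi => hadj (i + 2) (by omega)
    · intro i hi
      have h0 := hne (i + 2) (by omega) 0 (by omega) (by omega)
      have h1 := hne (i + 2) (by omega) 1 (by omega) (by omega)
      have h2 := hne (i + 2 + 1) (by omega) 1 (by omega) (by omega)
      have h := halt (i + 2) (by omega)
      have hnew : s(p (i + 2), p (i + 2 + 1)) ≠ s(p 0, p 1) := by simp [h0, h1]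
      have hold : s(p (i + 2), p (i + 2 + 1)) ≠ s(p 1, p 2) := by simp [h1, h2]
      rw [Nat.add_mod_right] at h
      rw [← h, show i + 1 + 2 = i + 2 + 1 by omega, Finset.mem_insert, Finset.mem_erase]
      simp only [hnew, hold, false_or, ne_eq, not_false_eq_true, true_and]
    · intro i hi j hj h
      have := hinj (i + 2) (by omega) (j + 2) (by omega) h
      omega

theorem mem_left_iff_even_of_path {V : Type*} {G : SimpleGraph V} {L R : Set V}
    (hLR : ∀ v : V, v ∈ L ↔ v ∉ R)
    (hbip : ∀ u v : V, G.Adj u v → (u ∈ L ∧ v ∈ R) ∨ (u ∈ R ∧ v ∈ L))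
    {p : ℕ → V} {k : ℕ} (h0 : p 0 ∈ L) (hadj : ∀ i < k, G.Adj (p i) (p (i + 1)))
    {i : ℕ} (hi : i ≤ k) : p i ∈ L ↔ i % 2 = 0 := by
  induction i with
  | zero => simpa using h0
  | succ i ih =>
    have ih := ih (by omega)
    have h1 := hLR (p i)
    have h2 := hLR (p (i + 1))
    rcases hbip _ _ (hadj i (by omega)) with h | h
    · have : i % 2 = 0 := ih.1 h.1
      simp only [h2, h.2, not_true_eq_false, false_iff]
      omega
    · have : ¬ i % 2 = 0 := fun hc => h1.1 (ih.2 hc) h.1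
      simp only [h.2, true_iff]
      omega

theorem AltReach.of_free {V : Type*} {G : SimpleGraph V} {L : Set V} {M : Finset (Sym2 V)}
    {v : V} (hv : v ∈ L) (hfree : MFree M v) : AltReach G L M v :=
  ⟨0, fun _ => v, hv, hfree, rfl, by simp, by simp, by omega⟩

/-- A neighbour of an alternately reachable vertex of `L` is alternately reachable. -/
theorem AltReach.of_adj {V : Type*} {G : SimpleGraph V} {L R : Set V}
    (hLR : ∀ v : V, v ∈ L ↔ v ∉ R)
    (hbip : ∀ u v : V, G.Adj u v → (u ∈ L ∧ v ∈ R) ∨ (u ∈ R ∧ v ∈ L))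
    {M : Finset (Sym2 V)} (hM : IsEdgeMatching G M) {u v : V} (huv : G.Adj u v) (hu : u ∈ L)
    (hreach : AltReach G L M u) : AltReach G L M v := by
  obtain ⟨k, p, h0, hfree, rfl, hadj, halt, hinj⟩ := hreach
  have hk : k % 2 = 0 := (mem_left_iff_even_of_path hLR hbip h0 hadj le_rfl).1 hu
  by_cases hon : ∃ j ≤ k, p j = v
  · obtain ⟨j, hj, rfl⟩ := hon
    exact ⟨j, p, h0, hfree, rfl, fun i hi => hadj i (by omega), fun i hi => halt i (by omega),
      fun i hi l hl => hinj i (by omega) l (by omega)⟩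
  push Not at hon
  have hnot : s(p k, v) ∉ M := by
    intro hmem
    rcases k with _ | k
    · exact hfree _ hmem (Sym2.mem_mk_left _ _)
    · have hprev : s(p k, p (k + 1)) ∈ M := (halt k (by omega)).2 (by omega)
      have heq : s(p (k + 1), v) = s(p k, p (k + 1)) := by
        by_contra hne
        exact hM.2 _ hmem _ hprev hne _ (Sym2.mem_mk_left _ _) (Sym2.mem_mk_right _ _)
      rw [Sym2.eq_swap, Sym2.congr_left] at heq
      exact hon k (by omega) heq.symm
  have hq : ∀ i ≤ k, Function.update p (k + 1) v i = p i := fun i hi =>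
    Function.update_of_ne (by omega) _ _
  have hqlast : Function.update p (k + 1) v (k + 1) = v := Function.update_self _ _ _
  refine ⟨k + 1, Function.update p (k + 1) v, ?_, ?_, hqlast, ?_, ?_, ?_⟩
  · rwa [hq 0 (by omega)]
  · rwa [hq 0 (by omega)]
  · intro i hi
    rcases Nat.lt_succ_iff_lt_or_eq.1 hi with hi | rfl
    · rw [hq i (by omega), hq (i + 1) (by omega)]
      exact hadj i hi
    · rwa [hq i le_rfl, hqlast]
  · intro i hi
    rcases Nat.lt_succ_iff_lt_or_eq.1 hi with hi | rfl
    · rw [hq i (by omega), hq (i + 1) (by omega)]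
      exact halt i hi
    · rw [hq i le_rfl, hqlast]
      simp [hnot, hk]
  · intro i hi j hj h
    rcases Nat.le_succ_iff.1 hi with hi | rfl <;> rcases Nat.le_succ_iff.1 hj with hj | rfl
    · rw [hq i hi, hq j hj] at h
      exact hinj i hi j hj h
    · rw [hq i hi, hqlast] at h
      exact absurd h (hon i hi)
    · rw [hq j hj, hqlast] at h
      exact absurd h.symm (hon j hj)
    · rfl

/-- Let `G` be bipartite with bipartition `(L, R)` and let `M` be a
maximum matching in `G`.  With `P_L*` the free vertices of `L`, `P_L` (resp. `P_R`) the
matched vertices of `L` (resp. `R`) reachable from `P_L*` by an alternating path starting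
with a non-matching edge, `Q_R*` the free vertices of `R`, and `Q_R` the matched vertices
of `R` not so reachable, `G` contains no edge between `P_L* ∪ P_L` and `Q_R* ∪ Q_R`. -/
theorem stmt9 {V : Type*} [Fintype V] (G : SimpleGraph V) (L R : Set V)
    (hLR : ∀ v : V, v ∈ L ↔ v ∉ R)
    (hbip : ∀ u v : V, G.Adj u v → (u ∈ L ∧ v ∈ R) ∨ (u ∈ R ∧ v ∈ L))
    (M : Finset (Sym2 V)) (hM : ↑M ⊆ G.edgeSet)
    (hmatch : ∀ e ∈ M, ∀ f ∈ M, e ≠ f → ∀ v : V, v ∈ e → v ∉ f)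
    (hmax : ∀ M' : Finset (Sym2 V), ↑M' ⊆ G.edgeSet →
      (∀ e ∈ M', ∀ f ∈ M', e ≠ f → ∀ v : V, v ∈ e → v ∉ f) → M'.card ≤ M.card) :
    ∀ u v : V, G.Adj u v →
      u ∈ {x | x ∈ L ∧ MFree M x} ∪ {x | x ∈ L ∧ ¬ MFree M x ∧ AltReach G L M x} →
      v ∉ {x | x ∈ R ∧ MFree M x} ∪ {x | x ∈ R ∧ ¬ MFree M x ∧ ¬ AltReach G L M x} := by
  intro u v huv hu hv
  have hMatching : IsEdgeMatching G M := ⟨hM, hmatch⟩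
  have huL : u ∈ L := hu.elim And.left And.left
  have hreach : AltReach G L M v := AltReach.of_adj hLR hbip hMatching huv huL
    (hu.elim (fun h => .of_free h.1 h.2) fun h => h.2.2)
  rcases hv with ⟨hvR, hvfree⟩ | ⟨-, -, hnot⟩
  · obtain ⟨k, p, h0, hfree, rfl, hadj, halt, hinj⟩ := hreach
    have hk : k % 2 ≠ 0 := fun hk =>
      (hLR _).1 ((mem_left_iff_even_of_path hLR hbip h0 hadj le_rfl).2 hk) hvR
    obtain ⟨m, rfl⟩ : ∃ m, k = 2 * m + 1 := ⟨k / 2, by omega⟩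
    obtain ⟨M', hM', hcard⟩ :=
      hMatching.exists_card_eq_add_one m hfree hvfree hadj halt hinj
    have := hmax M' hM'.1 hM'.2
    omega
  · exact hnot hreach
end

section
/- Let G be a bipartite graph, let H be an unweighted edge-degree-constrained subgraph EDCS(G, β, β−1), and let G' be obtained from G by inserting a single new edge e. Then there exists an unweighted EDCS(G', β, β−1) H' such that the symmetric difference of H and H' contains at most 4β edges. -/
open SimpleGraph

section Helpers

variable {V : Type*} [Fintype V]

open Classical in
/-- Adding a new edge raises the degree of exactly its two endpoints. -/
theorem sdeg_sup_edge {H : SimpleGraph V} {a b : V} (hab : a ≠ b) (h : ¬ H.Adj a b) (v : V) :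
    sdeg (H ⊔ edge a b) v =
      sdeg H v + (if v = a then 1 else 0) + (if v = b then 1 else 0) := by
  unfold sdeg
  by_cases hva : v = a
  · subst hva
    have hset : (H ⊔ edge v b).neighborSet v = insert b (H.neighborSet v) := by
      ext w
      simp only [mem_neighborSet, sup_adj, edge_adj, Set.mem_insert_iff]
      grind
    rw [hset, Set.ncard_insert_of_notMem (by simpa using h) (Set.toFinite _)]
    simp [hab]
  · by_cases hvb : v = b
    · subst hvb
      have hset : (H ⊔ edge a v).neighborSet v = insert a (H.neighborSet v) := by
        ext w
        simp only [mem_neighborSet, sup_adj, edge_adj, Set.mem_insert_iff]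
        grind
      rw [hset, Set.ncard_insert_of_notMem (by simpa [adj_comm] using h) (Set.toFinite _)]
      simp [hva]
    · have hset : (H ⊔ edge a b).neighborSet v = H.neighborSet v := by
        ext w
        simp only [mem_neighborSet, sup_adj, edge_adj]
        grind
      simp [hset, hva, hvb]

open Classical in
/-- Removing an edge lowers the degree of exactly its two endpoints. -/
theorem sdeg_sdiff_edge {H : SimpleGraph V} {a b : V} (h : H.Adj a b) (v : V) :
    sdeg H v =
      sdeg (H \ edge a b) v + (if v = a then 1 else 0) + (if v = b then 1 else 0) := by
  have hle : edge a b ≤ H := by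
    intro u w huw
    rw [edge_adj] at huw
    rcases huw.1 with ⟨rfl, rfl⟩ | ⟨rfl, rfl⟩
    exacts [h, h.symm]
  rw [← sdeg_sup_edge h.ne (by simp [sdiff_adj, edge_adj, h.ne]), sdiff_sup_cancel hle]

theorem ncard_symmDiff_edgeSet_triangle (H K L : SimpleGraph V) :
    (symmDiff H.edgeSet L.edgeSet).ncard ≤
      (symmDiff H.edgeSet K.edgeSet).ncard + (symmDiff K.edgeSet L.edgeSet).ncard :=
  (Set.ncard_le_ncard (symmDiff_triangle _ _ _) (Set.toFinite _)).trans (Set.ncard_union_le _ _)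

theorem ncard_symmDiff_edgeSet_sup_edge_le (H : SimpleGraph V) (a b : V) :
    (symmDiff H.edgeSet (H ⊔ edge a b).edgeSet).ncard ≤ 1 := by
  refine (Set.ncard_le_ncard (t := {s(a, b)}) ?_ (Set.toFinite _)).trans
    (Set.ncard_singleton _).le
  intro e
  induction e with | _ u v
  simp only [Set.mem_symmDiff, mem_edgeSet, sup_adj, edge_adj, Set.mem_singleton_iff, Sym2.eq_iff]
  tauto

theorem ncard_symmDiff_edgeSet_sdiff_edge_le (H : SimpleGraph V) (a b : V) :
    (symmDiff H.edgeSet (H \ edge a b).edgeSet).ncard ≤ 1 := by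
  refine (Set.ncard_le_ncard (t := {s(a, b)}) ?_ (Set.toFinite _)).trans
    (Set.ncard_singleton _).le
  intro e
  induction e with | _ u v
  simp only [Set.mem_symmDiff, mem_edgeSet, sdiff_adj, edge_adj, Set.mem_singleton_iff, Sym2.eq_iff]
  tauto

/-- `H` is an EDCS of `G` with parameters `β` and `β - 1`, measured with the vertex weights `D`
in place of the degrees of `H`. -/
structure IsWeightedEDCS (G H : SimpleGraph V) (β : ℕ) (D : V → ℕ) : Prop where
  le : H ≤ G
  add_le : ∀ u v, H.Adj u v → D u + D v ≤ β
  le_add : ∀ u v, G.Adj u v → ¬ H.Adj u v → β ≤ D u + D v + 1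

open Classical in
/-- Raising the excess `D - sdeg H` of the weights over the degrees by one at a single vertex `a`
can be accommodated by changing at most `2 * D a + 1` edges along an alternating path, and this
raises weights by at most one and only on the side of `a`. -/
theorem IsWeightedEDCS.exists_raise {G : SimpleGraph V} {β : ℕ} {C : V → Fin 2}
    (hC : ∀ u v, G.Adj u v → C u ≠ C v) {H : SimpleGraph V} {D : V → ℕ}
    (hH : IsWeightedEDCS G H β D) (a : V) (hdeg : ∀ v, C v ≠ C a → sdeg H v ≤ D v) :
    ∃ (H' : SimpleGraph V) (D' : V → ℕ), IsWeightedEDCS G H' β D' ∧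
      (∀ v, D' v + sdeg H v = sdeg H' v + D v + if v = a then 1 else 0) ∧
      (∀ v, D' v ≤ D v + if C v = C a then 1 else 0) ∧
      (symmDiff H.edgeSet H'.edgeSet).ncard ≤ 2 * D a + 1 := by
  induction hk : D a using Nat.strong_induction_on generalizing H a with
  | _ k ih =>
  subst hk
  by_cases hc : ∃ c, H.Adj a c ∧ D a + D c = β
  swap
  · push Not at hc
    refine ⟨H, fun v => D v + if v = a then 1 else 0, ⟨hH.le, ?_, ?_⟩, ?_, ?_, by simp⟩
    · intro u v huv
      have h1 := hH.add_le u v huv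
      have h2 := huv.ne
      have h3 := hc u
      have h4 := hc v
      have h5 := huv.symm
      grind
    · intro u v huv hn
      have := hH.le_add u v huv hn
      omega
    · intro v
      dsimp only
      omega
    · intro v
      dsimp only
      split_ifs <;> grind
  obtain ⟨c, hac, hsum⟩ := hc
  have hCac := hC a c (hH.le hac)
  have hdel := sdeg_sdiff_edge hac
  set K := H \ edge a c with hK
  have hKadj : ∀ u v, K.Adj u v ↔ H.Adj u v ∧ ¬ (u = a ∧ v = c ∨ u = c ∧ v = a) := by
    intro u v
    rw [hK, sdiff_adj, edge_adj]
    have := H.ne_of_adj (a := u) (b := v)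
    tauto
  have hHK := ncard_symmDiff_edgeSet_sdiff_edge_le H a c
  rw [← hK] at hHK
  by_cases hx : ∃ x, G.Adj c x ∧ ¬ K.Adj c x ∧ D c + D x + 1 = β
  swap
  · push Not at hx
    have hpos : 1 ≤ D c := by
      have h1 := hdeg c hCac.symm
      have h2 := hdel c
      simp only [if_true] at h2
      omega
    refine ⟨K, fun v => D v - if v = c then 1 else 0, ⟨?_, ?_, ?_⟩, ?_, ?_, by omega⟩
    · exact sdiff_le.trans hH.le
    · intro u v huv
      have := hH.add_le u v ((hKadj u v).1 huv).1
      omega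
    · intro u v huv hn
      have h1 := hH.le_add u v huv
      have h2 := hx u
      have h3 := hx v
      have h4 := huv.ne
      have h5 := huv.symm
      have h6 : ¬ K.Adj v u := fun h => hn h.symm
      have h7 := hKadj u v
      grind
    · intro v
      have := hdel v
      dsimp only
      split_ifs at this ⊢ <;> grind
    · intro v
      dsimp only
      omega
  obtain ⟨x, hcx, hnK, hsumx⟩ := hx
  have hxa : x ≠ a := by
    rintro rfl
    omega
  have hCx : C x = C a := by
    have := hC c x hcx
    omega
  have hadd := sdeg_sup_edge hcx.ne hnK
  have hKL := ncard_symmDiff_edgeSet_sup_edge_le K c x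
  set L := K ⊔ edge c x with hL
  have hLadj : ∀ u v, L.Adj u v ↔ K.Adj u v ∨ (u = c ∧ v = x ∨ u = x ∧ v = c) := by
    intro u v
    rw [hL, sup_adj, edge_adj]
    have := hcx.ne
    grind
  have hLw : IsWeightedEDCS G L β D := by
    refine ⟨?_, ?_, ?_⟩
    · intro u v huv
      rcases (hLadj u v).1 huv with h | ⟨rfl, rfl⟩ | ⟨rfl, rfl⟩
      exacts [hH.le ((hKadj u v).1 h).1, hcx, hcx.symm]
    · intro u v huv
      rcases (hLadj u v).1 huv with h | ⟨rfl, rfl⟩ | ⟨rfl, rfl⟩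
      · exact hH.add_le u v ((hKadj u v).1 h).1
      · omega
      · omega
    · intro u v huv hn
      have h1 := hH.le_add u v huv
      have h2 := hLadj u v
      have h3 := hKadj u v
      grind
  have hdegL : ∀ v, C v ≠ C x → sdeg L v ≤ D v := by
    intro v hv
    have h1 := hdeg v (hCx ▸ hv)
    have h2 := hdel v
    have h3 := hadd v
    grind
  obtain ⟨H', D', hw, hdiff, hle, hcard⟩ := ih (D x) (by omega) hLw x hdegL rfl
  refine ⟨H', D', hw, ?_, ?_, ?_⟩
  · intro v
    have h1 := hdiff v
    have h2 := hdel v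
    have h3 := hadd v
    omega
  · simpa only [hCx] using hle
  · have h1 := ncard_symmDiff_edgeSet_triangle H K H'
    have h2 := ncard_symmDiff_edgeSet_triangle K L H'
    omega

end Helpers

/-- Let `H` be an unweighted EDCS(G, β, β−1) of a bipartite graph `G`,
and let `G'` be obtained from `G` by inserting a new edge `{a, b}`.  Then there is an
unweighted EDCS(G', β, β−1) `H'` whose symmetric difference with `H` has at most `4β`
edges. -/
theorem stmt13 {V : Type*} [Fintype V] (G H : SimpleGraph V)
    (hHG : H ≤ G) (β : ℕ)
    (hP1 : ∀ u v : V, H.Adj u v → sdeg H u + sdeg H v ≤ β)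
    (hP2 : ∀ u v : V, G.Adj u v → ¬ H.Adj u v → β - 1 ≤ sdeg H u + sdeg H v)
    (a b : V) (hab : a ≠ b) (hnadj : ¬ G.Adj a b)
    (hbip' : (G ⊔ SimpleGraph.fromEdgeSet {s(a, b)}).Colorable 2) :
    ∃ H' : SimpleGraph V, H' ≤ G ⊔ SimpleGraph.fromEdgeSet {s(a, b)} ∧
      (∀ u v : V, H'.Adj u v → sdeg H' u + sdeg H' v ≤ β) ∧
      (∀ u v : V, (G ⊔ SimpleGraph.fromEdgeSet {s(a, b)}).Adj u v → ¬ H'.Adj u v →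
        β - 1 ≤ sdeg H' u + sdeg H' v) ∧
      (symmDiff H.edgeSet H'.edgeSet).ncard ≤ 4 * β := by
  classical
  by_cases hlow : β ≤ sdeg H a + sdeg H b + 1
  · refine ⟨H, hHG.trans le_sup_left, hP1, ?_, by simp⟩
    intro u v huv hn
    rcases huv with h | h
    · exact hP2 u v h hn
    · change (edge a b).Adj u v at h
      rw [edge_adj] at h
      rcases h.1 with ⟨rfl, rfl⟩ | ⟨rfl, rfl⟩ <;> omega
  obtain ⟨C⟩ := hbip'
  have hC : ∀ u v, G.Adj u v → C u ≠ C v := fun u v h => C.valid (Or.inl h)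
  have hCab : C a ≠ C b := C.valid (Or.inr (by simp [hab]))
  have hw : IsWeightedEDCS G H β (sdeg H) := by
    refine ⟨hHG, hP1, fun u v huv hn => ?_⟩
    have := hP2 u v huv hn
    omega
  obtain ⟨H₁, D₁, hw₁, hdiff₁, hle₁, hcard₁⟩ := hw.exists_raise hC a fun _ _ => le_rfl
  obtain ⟨H₂, D₂, hw₂, hdiff₂, hle₂, hcard₂⟩ := hw₁.exists_raise hC b fun v _ => by
    have := hdiff₁ v
    omega
  have hdeg : ∀ v, sdeg (H₂ ⊔ edge a b) v = D₂ v := by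
    intro v
    have h1 := hdiff₁ v
    have h2 := hdiff₂ v
    rw [sdeg_sup_edge hab fun h => hnadj (hw₂.le h)]
    omega
  have ha₁ := hle₁ a
  have hb₁ := hle₁ b
  have ha₂ := hle₂ a
  have hb₂ := hle₂ b
  simp only [hCab, hCab.symm, if_true, if_false] at ha₁ hb₁ ha₂ hb₂
  refine ⟨H₂ ⊔ edge a b, sup_le_sup_right hw₂.le _, ?_, ?_, ?_⟩
  · intro u v huv
    rw [hdeg, hdeg]
    rcases huv with h | h
    · exact hw₂.add_le u v h
    · rw [edge_adj] at h
      rcases h.1 with ⟨rfl, rfl⟩ | ⟨rfl, rfl⟩ <;> omega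
  · intro u v huv hn
    rw [hdeg, hdeg]
    rcases huv with h | h
    · have := hw₂.le_add u v h fun h' => hn (Or.inl h')
      omega
    · exact absurd (Or.inr h) hn
  · have h1 := ncard_symmDiff_edgeSet_triangle H H₁ (H₂ ⊔ edge a b)
    have h2 := ncard_symmDiff_edgeSet_triangle H₁ H₂ (H₂ ⊔ edge a b)
    have h3 := ncard_symmDiff_edgeSet_sup_edge_le H₂ a b
    omega
end

section
/- Let G be a bipartite graph, let 0 < λ < 1 with βλ/6 a positive integer, let H be an unweighted edge-degree-constrained subgraph EDCS(G, β, β(1−λ)), and let G' be obtained from G by deleting a single edge e of G. Then there exists an unweighted EDCS(G', β, β(1−λ)) H' (with H' ⊆ E(G')) such that the symmetric difference of H∖{e} and H' contains at most 24/λ + 2 edges. -/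
open SimpleGraph

/-- `K` is an unweighted EDCS(G, β, B), with integer parameters. -/
structure IsEDCS {V : Type*} (G K : SimpleGraph V) (β B : ℤ) : Prop where
  le : K ≤ G
  upper : ∀ u v, K.Adj u v → (sdeg K u + sdeg K v : ℤ) ≤ β
  lower : ∀ u v, G.Adj u v → ¬ K.Adj u v → B ≤ (sdeg K u + sdeg K v : ℤ)

open Classical in
/-- An intermediate stage of the repair: `f` is a fixed target degree function for which `K`
satisfies the EDCS inequalities with lower parameter `β - m`, and the true degrees of `K` differ
from `f` only by `σ p` at `p` and by `-σ q` at `q`, where `σ` is a proper sign colouring of `G`. -/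
structure RepairState {V : Type*} (G K : SimpleGraph V) (f σ : V → ℤ) (β m : ℤ) (p q : V) :
    Prop where
  le : K ≤ G
  sign : ∀ z, σ z = 1 ∨ σ z = -1
  sign_adj : ∀ u v, G.Adj u v → σ v = -σ u
  nonneg : ∀ z, 0 ≤ f z
  le_bound : ∀ z, f z ≤ β
  gap : 1 ≤ m
  deg : ∀ z, (sdeg K z : ℤ) =
    f z + σ z * ((if z = p then 1 else 0) - (if z = q then 1 else 0))
  upper : ∀ u v, K.Adj u v → f u + f v ≤ β
  lower : ∀ u v, G.Adj u v → ¬ K.Adj u v → β - m ≤ f u + f v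

/-- `m` times a bound on the number of further moves of a defect of sign `s` and target
degree `t`. -/
def defectPotential (β m s t : ℤ) : ℤ :=
  if s = -1 then 2 * (β - t) else 2 * t + m

section

variable {V : Type*} {G K : SimpleGraph V} {f σ : V → ℤ} {β m : ℤ} {p q : V}

lemma defectPotential_nonneg {s t : ℤ} (h0 : 0 ≤ t) (h1 : t ≤ β) (hm : 1 ≤ m) :
    0 ≤ defectPotential β m s t := by
  unfold defectPotential
  split_ifs <;> linarith

open Classical in
lemma sdeg_sup_edge_s16 [Finite V] {u v : V} (huv : u ≠ v) (h : ¬ K.Adj u v) (z : V) :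
    (sdeg (K ⊔ edge u v) z : ℤ) =
      sdeg K z + (if z = u then 1 else 0) + (if z = v then 1 else 0) := by
  have hvu : ¬ K.Adj v u := fun h' => h h'.symm
  unfold sdeg
  by_cases hu : z = u
  · subst hu
    have : (K ⊔ edge z v).neighborSet z = insert v (K.neighborSet z) := by
      ext w
      simp only [mem_neighborSet, sup_adj, edge_adj, Set.mem_insert_iff]
      grind
    rw [this, Set.ncard_insert_of_notMem (by simpa using h)]
    simp [huv]
  · by_cases hv : z = v
    · subst hv
      have : (K ⊔ edge u z).neighborSet z = insert u (K.neighborSet z) := by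
        ext w
        simp only [mem_neighborSet, sup_adj, edge_adj, Set.mem_insert_iff]
        grind
      rw [this, Set.ncard_insert_of_notMem (by simpa using hvu)]
      simp [hu]
    · have : (K ⊔ edge u v).neighborSet z = K.neighborSet z := by
        ext w
        simp only [mem_neighborSet, sup_adj, edge_adj]
        grind
      simp [this, hu, hv]

open Classical in
lemma sdeg_deleteEdges [Finite V] {u v : V} (h : K.Adj u v) (z : V) :
    (sdeg (K.deleteEdges {s(u, v)}) z : ℤ) =
      sdeg K z - (if z = u then 1 else 0) - (if z = v then 1 else 0) := by
  have hK : K.deleteEdges {s(u, v)} ⊔ edge u v = K := by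
    ext x y
    simp only [sup_adj, deleteEdges_adj, edge_adj, Set.mem_singleton_iff, Sym2.eq_iff]
    grind [K.ne_of_adj h, K.adj_comm]
  have := sdeg_sup_edge_s16 (K := K.deleteEdges {s(u, v)}) (K.ne_of_adj h) (by simp) z
  rw [hK] at this
  linarith

lemma ncard_symmDiff_le_succ {α : Type*} [Finite α] {S T U : Set α} {e : α}
    (h : symmDiff S T ⊆ {e}) :
    (symmDiff S U).ncard ≤ (symmDiff T U).ncard + 1 := by
  refine le_trans (Set.ncard_le_ncard (t := insert e (symmDiff T U)) ?_) (Set.ncard_insert_le _ _)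
  refine (symmDiff_triangle S T U).trans ?_
  exact Set.union_subset (h.trans (by simp)) (Set.subset_insert _ _)

lemma symmDiff_edgeSet_sup_edge (K : SimpleGraph V) (u v : V) :
    symmDiff K.edgeSet (K ⊔ edge u v).edgeSet ⊆ {s(u, v)} := by
  intro e
  induction e with | _ x y =>
  simp only [Set.mem_symmDiff, mem_edgeSet, sup_adj, edge_adj, Set.mem_singleton_iff, Sym2.eq_iff]
  tauto

lemma symmDiff_edgeSet_deleteEdges (K : SimpleGraph V) (u v : V) :
    symmDiff K.edgeSet (K.deleteEdges {s(u, v)}).edgeSet ⊆ {s(u, v)} := by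
  intro e
  induction e with | _ x y =>
  simp only [Set.mem_symmDiff, mem_edgeSet, deleteEdges_adj, Set.mem_singleton_iff]
  tauto

namespace RepairState

lemma symm (h : RepairState G K f σ β m p q) : RepairState G K f (fun z => -σ z) β m q p where
  le := h.le
  sign z := by have := h.sign z; omega
  sign_adj u v huv := by have := h.sign_adj u v huv; omega
  nonneg := h.nonneg
  le_bound := h.le_bound
  gap := h.gap
  deg z := by rw [h.deg z]; ring
  upper := h.upper
  lower := h.lower

lemma isEDCS (h : RepairState G K f σ β m p p) : IsEDCS G K β (β - m) where
  le := h.le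
  upper u v huv := by simpa [h.deg] using h.upper u v huv
  lower u v huv hK := by simpa [h.deg] using h.lower u v huv hK

/-- Adding an edge at the defect `p` moves the defect to the other end. -/
lemma add_edge [Finite V] (h : RepairState G K f σ β m p q) {v : V} (hs : σ p = -1)
    (hG : G.Adj p v) (hK : ¬ K.Adj p v) (hsum : f p + f v ≤ β) :
    RepairState G (K ⊔ edge p v) f σ β m v q where
  le := sup_le h.le (by
    intro x y hxy
    rw [edge_adj] at hxy
    rcases hxy.1 with ⟨rfl, rfl⟩ | ⟨rfl, rfl⟩
    exacts [hG, hG.symm])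
  sign := h.sign
  sign_adj := h.sign_adj
  nonneg := h.nonneg
  le_bound := h.le_bound
  gap := h.gap
  deg z := by
    have hv := h.sign_adj p v hG
    rw [sdeg_sup_edge_s16 hG.ne hK, h.deg z]
    have := hG.ne
    by_cases h1 : z = p <;> by_cases h2 : z = v <;> by_cases h3 : z = q <;>
      simp_all
  upper x y hxy := by
    rw [sup_adj, edge_adj] at hxy
    rcases hxy with hxy | ⟨⟨rfl, rfl⟩ | ⟨rfl, rfl⟩, -⟩
    · exact h.upper x y hxy
    · exact hsum
    · linarith
  lower x y hxy hn := h.lower x y hxy fun h' => hn (Or.inl h')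

/-- Removing an edge at the defect `p` moves the defect to the other end. -/
lemma remove_edge [Finite V] (h : RepairState G K f σ β m p q) {v : V} (hs : σ p = 1)
    (hK : K.Adj p v) (hsum : β - m ≤ f p + f v) :
    RepairState G (K.deleteEdges {s(p, v)}) f σ β m v q where
  le := (deleteEdges_le _).trans h.le
  sign := h.sign
  sign_adj := h.sign_adj
  nonneg := h.nonneg
  le_bound := h.le_bound
  gap := h.gap
  deg z := by
    have hv := h.sign_adj p v (h.le hK)
    rw [sdeg_deleteEdges hK, h.deg z]
    have := hK.ne
    by_cases h1 : z = p <;> by_cases h2 : z = v <;> by_cases h3 : z = q <;>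
      simp_all <;> ring
  upper x y hxy := h.upper x y (deleteEdges_le _ hxy)
  lower x y hxy hn := by
    by_cases hxyK : K.Adj x y
    · have he : s(x, y) = s(p, v) := by
        by_contra hne
        exact hn (by simpa [hxyK] using hne)
      rcases Sym2.eq_iff.1 he with ⟨rfl, rfl⟩ | ⟨rfl, rfl⟩ <;> linarith
    · exact h.lower x y hxy hxyK

/-- If `K` violates an EDCS inequality on an edge at the defect `p`, then changing that edge moves
the defect along it, which either cancels the two defects or lowers the potential by `m`. -/
lemma exists_move [Finite V] (h : RepairState G K f σ β m p q) (hpq : p ≠ q) {v : V}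
    (hbad : K.Adj p v ∧ β < (sdeg K p + sdeg K v : ℤ) ∨
      G.Adj p v ∧ ¬ K.Adj p v ∧ (sdeg K p + sdeg K v : ℤ) < β - m) :
    ∃ K', RepairState G K' f σ β m v q ∧ symmDiff K.edgeSet K'.edgeSet ⊆ {s(p, v)} ∧
      (v = q ∨ defectPotential β m (σ v) (f v) + m = defectPotential β m (σ p) (f p)) := by
  have hm := h.gap
  have hG : G.Adj p v := hbad.elim (fun hb => h.le hb.1) (·.1)
  have hσ := h.sign_adj p v hG
  have hdp := h.deg p
  have hdv := h.deg v
  simp only [if_true, if_neg hpq, if_neg hG.ne'] at hdp hdv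
  rcases hbad with ⟨hK, hlt⟩ | ⟨-, hK, hlt⟩
  · have hle := h.upper p v hK
    rcases h.sign p with hs | hs
    · refine ⟨_, h.remove_edge hs hK ?_, symmDiff_edgeSet_deleteEdges _ _ _, ?_⟩
      · split_ifs at hdv <;> rw [hσ] at hdv <;> rw [hs] at hdp hdv <;> linarith
      · by_cases hv : v = q
        · exact Or.inl hv
        · rw [if_neg hv] at hdv
          rw [hσ, hs]
          rw [hs] at hdp
          right
          norm_num [defectPotential]
          linarith
    · split_ifs at hdv <;> rw [hσ] at hdv <;> rw [hs] at hdp hdv <;> linarith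
  · have hle := h.lower p v hG hK
    rcases h.sign p with hs | hs
    · split_ifs at hdv <;> rw [hσ] at hdv <;> rw [hs] at hdp hdv <;> linarith
    · refine ⟨_, h.add_edge hs hG hK ?_, symmDiff_edgeSet_sup_edge _ _ _, ?_⟩
      · split_ifs at hdv <;> rw [hσ] at hdv <;> rw [hs] at hdp hdv <;> linarith
      · by_cases hv : v = q
        · exact Or.inl hv
        · rw [if_neg hv] at hdv
          rw [hσ, hs]
          rw [hs] at hdp
          right
          norm_num [defectPotential]
          linarith

/-- A repair state can be completed to an EDCS, with the number of changed edges bounded by the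
potentials of its two defects. -/
theorem exists_isEDCS [Finite V] (h : RepairState G K f σ β m p q) :
    ∃ H', IsEDCS G H' β (β - m) ∧
      m * (symmDiff K.edgeSet H'.edgeSet).ncard ≤
        defectPotential β m (σ p) (f p) + defectPotential β m (-σ q) (f q) + m := by
  obtain ⟨n, hn⟩ : ∃ n : ℕ,
      defectPotential β m (σ p) (f p) + defectPotential β m (-σ q) (f q) < n :=
    exists_nat_gt _
  induction n generalizing K σ p q with
  | zero =>
    have h1 := defectPotential_nonneg (s := σ p) (h.nonneg p) (h.le_bound p) h.gap
    have h2 := defectPotential_nonneg (s := -σ q) (h.nonneg q) (h.le_bound q) h.gap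
    simp only [Nat.cast_zero] at hn
    linarith
  | succ n ih =>
    have hm := h.gap
    have pot {s : ℤ} (z : V) : 0 ≤ defectPotential β m s (f z) :=
      defectPotential_nonneg (h.nonneg z) (h.le_bound z) hm
    by_cases hK : IsEDCS G K β (β - m)
    · refine ⟨K, hK, ?_⟩
      have h1 := pot (s := σ p) p
      have h2 := pot (s := -σ q) q
      simp only [symmDiff_self, Set.bot_eq_empty, Set.ncard_empty, Nat.cast_zero, mul_zero]
      linarith
    have hpq : p ≠ q := by
      rintro rfl
      exact hK h.isEDCS
    have at_defect {σ : V → ℤ} {p q v : V} (h : RepairState G K f σ β m p q) (hpq : p ≠ q)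
        (hn : defectPotential β m (σ p) (f p) + defectPotential β m (-σ q) (f q) < (n + 1 : ℕ))
        (hbad : K.Adj p v ∧ β < (sdeg K p + sdeg K v : ℤ) ∨
          G.Adj p v ∧ ¬ K.Adj p v ∧ (sdeg K p + sdeg K v : ℤ) < β - m) :
        ∃ H', IsEDCS G H' β (β - m) ∧
          m * (symmDiff K.edgeSet H'.edgeSet).ncard ≤
            defectPotential β m (σ p) (f p) + defectPotential β m (-σ q) (f q) + m := by
      obtain ⟨K', hK', hdiff, rfl | hpot⟩ := h.exists_move hpq hbad
      · refine ⟨K', hK'.isEDCS, ?_⟩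
        have hcard : ((symmDiff K.edgeSet K'.edgeSet).ncard : ℤ) ≤ 1 := by
          exact_mod_cast (Set.ncard_le_ncard hdiff).trans (Set.ncard_singleton _).le
        nlinarith [pot (s := σ p) p, pot (s := -σ v) v]
      · push_cast at hn
        obtain ⟨H', hH', hcard⟩ := ih hK' (by linarith)
        refine ⟨H', hH', ?_⟩
        have hle : ((symmDiff K.edgeSet H'.edgeSet).ncard : ℤ) ≤
            (symmDiff K'.edgeSet H'.edgeSet).ncard + 1 := by
          exact_mod_cast ncard_symmDiff_le_succ hdiff
        nlinarith
    obtain ⟨u, v, hbad⟩ : ∃ u v, K.Adj u v ∧ β < (sdeg K u + sdeg K v : ℤ) ∨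
        G.Adj u v ∧ ¬ K.Adj u v ∧ (sdeg K u + sdeg K v : ℤ) < β - m := by
      by_contra! hno
      exact hK ⟨h.le, fun u v => (hno u v).1, fun u v => (hno u v).2⟩
    have hbad' : K.Adj v u ∧ β < (sdeg K v + sdeg K u : ℤ) ∨
        G.Adj v u ∧ ¬ K.Adj v u ∧ (sdeg K v + sdeg K u : ℤ) < β - m := by
      rwa [K.adj_comm, G.adj_comm, add_comm (sdeg K v : ℤ)]
    have hn' : defectPotential β m (-σ q) (f q) + defectPotential β m (- -σ p) (f p) <
        (n + 1 : ℕ) := by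
      rwa [neg_neg, add_comm]
    by_cases hp : u = p ∨ v = p
    · rcases hp with rfl | rfl
      · exact at_defect h hpq hn hbad
      · exact at_defect h hpq hn hbad'
    by_cases hq : u = q ∨ v = q
    · obtain ⟨H', hH', hcard⟩ : ∃ H', IsEDCS G H' β (β - m) ∧
          m * (symmDiff K.edgeSet H'.edgeSet).ncard ≤
            defectPotential β m (-σ q) (f q) + defectPotential β m (- -σ p) (f p) + m := by
        rcases hq with rfl | rfl
        · exact at_defect h.symm hpq.symm hn' hbad
        · exact at_defect h.symm hpq.symm hn' hbad'
      rw [neg_neg] at hcard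
      exact ⟨H', hH', by linarith⟩
    push Not at hp hq
    have hdu := h.deg u
    have hdv := h.deg v
    simp only [if_neg hp.1, if_neg hq.1, if_neg hp.2, if_neg hq.2] at hdu hdv
    rcases hbad with ⟨hadj, hlt⟩ | ⟨hadj, hnadj, hlt⟩
    · linarith [h.upper u v hadj]
    · linarith [h.lower u v hadj hnadj]

end RepairState

lemma sdeg_le_of_upper [Finite V] {β : ℕ} (h : ∀ u v, K.Adj u v → sdeg K u + sdeg K v ≤ β)
    (z : V) : sdeg K z ≤ β := by
  by_cases hz : (K.neighborSet z).Nonempty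
  · obtain ⟨w, hw⟩ := hz
    exact le_trans (Nat.le_add_right _ _) (h z w hw)
  · simp [sdeg, Set.not_nonempty_iff_eq_empty.1 hz]

/-- Deleting an edge of `H` from both graphs leaves a repair state with defects at its ends. -/
lemma RepairState.of_deleteEdges [Finite V] {H : SimpleGraph V} {β m : ℕ} (c : G.Coloring Bool)
    (hm : 1 ≤ m) (hHG : H ≤ G) (hP1 : ∀ u v, H.Adj u v → sdeg H u + sdeg H v ≤ β)
    (hP2 : ∀ u v, G.Adj u v → ¬ H.Adj u v → (β - m : ℤ) ≤ sdeg H u + sdeg H v)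
    {a b : V} (hab : H.Adj a b) :
    RepairState (G.deleteEdges {s(a, b)}) (H.deleteEdges {s(a, b)}) (fun z => (sdeg H z : ℤ))
      (fun z => if c z = c a then -1 else 1) β m a b where
  le := deleteEdges_mono hHG
  sign z := by split_ifs <;> simp
  sign_adj u v huv := by
    have hc := c.valid (deleteEdges_le _ huv)
    cases hu : c u <;> cases hv : c v <;> cases ha : c a <;> simp_all
  nonneg z := by positivity
  le_bound z := by exact_mod_cast sdeg_le_of_upper hP1 z
  gap := by exact_mod_cast hm
  deg z := by
    have hc := c.valid (hHG hab)
    have := hab.ne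
    rw [sdeg_deleteEdges hab]
    by_cases h1 : z = a <;> by_cases h2 : z = b <;> simp_all [eq_comm, sub_eq_add_neg]
  upper u v huv := by exact_mod_cast hP1 u v (deleteEdges_le _ huv)
  lower u v huv hn := hP2 u v (deleteEdges_le _ huv) fun h => hn (by
    rw [deleteEdges_adj] at huv ⊢
    exact ⟨h, huv.2⟩)

end

/-- Let `H` be an unweighted EDCS(G, β, β(1−λ)) of a bipartite graph
`G`, with `0 < λ < 1` and `βλ/6` a positive integer, and let `G'` be obtained from `G` by
deleting the edge `{a, b}` of `G`.  Then there is an unweighted EDCS(G', β, β(1−λ)) `H'`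
whose symmetric difference with `H ∖ {a, b}` has at most `24/λ + 2` edges. -/
theorem stmt16 {V : Type*} [Fintype V] (G H : SimpleGraph V)
    (hbip : G.Colorable 2) (hHG : H ≤ G)
    (β : ℕ) (lam : ℝ) (hlam0 : 0 < lam) (hlam1 : lam < 1)
    (ℓ : ℕ) (hℓpos : 0 < ℓ) (hℓ : (ℓ : ℝ) = β * lam / 6)
    (hP1 : ∀ u v : V, H.Adj u v → sdeg H u + sdeg H v ≤ β)
    (hP2 : ∀ u v : V, G.Adj u v → ¬ H.Adj u v →
      (β : ℝ) * (1 - lam) ≤ (sdeg H u + sdeg H v : ℝ))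
    (a b : V) (hadj : G.Adj a b) :
    ∃ H' : SimpleGraph V, H' ≤ G.deleteEdges {s(a, b)} ∧
      (∀ u v : V, H'.Adj u v → sdeg H' u + sdeg H' v ≤ β) ∧
      (∀ u v : V, (G.deleteEdges {s(a, b)}).Adj u v → ¬ H'.Adj u v →
        (β : ℝ) * (1 - lam) ≤ (sdeg H' u + sdeg H' v : ℝ)) ∧
      ((symmDiff (H.deleteEdges {s(a, b)}).edgeSet H'.edgeSet).ncard : ℝ) ≤
        24 / lam + 2 := by
  have hm : (β : ℝ) * (1 - lam) = ((β - (6 * ℓ : ℕ) : ℤ) : ℝ) := by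
    push_cast
    rw [hℓ]
    ring
  simp only [hm] at hP2 ⊢
  have hP2' : ∀ u v, G.Adj u v → ¬ H.Adj u v →
      (β - (6 * ℓ : ℕ) : ℤ) ≤ sdeg H u + sdeg H v := fun u v h h' => by
    exact_mod_cast hP2 u v h h'
  by_cases hab : H.Adj a b
  · let c : G.Coloring Bool := hbip.toColoring (by simp)
    have hstate := RepairState.of_deleteEdges c (by omega) hHG hP1 hP2' hab
    obtain ⟨H', hH', hcard⟩ := hstate.exists_isEDCS
    refine ⟨H', hH'.le, fun u v h => by exact_mod_cast hH'.upper u v h,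
      fun u v h h' => by exact_mod_cast hH'.lower u v h h', ?_⟩
    have hc : c b ≠ c a := (c.valid hadj).symm
    simp only [defectPotential, if_true, if_neg hc] at hcard
    set n := (symmDiff (H.deleteEdges {s(a, b)}).edgeSet H'.edgeSet).ncard
    have hbound : (6 * ℓ : ℝ) * n ≤ 4 * β + 6 * ℓ := by
      have : (6 * ℓ : ℤ) * n ≤ 4 * β + 6 * ℓ := by
        push_cast at hcard
        linarith [Int.natCast_nonneg (sdeg H a), Int.natCast_nonneg (sdeg H b)]
      exact_mod_cast this
    have hℓ' : (0 : ℝ) < ℓ := by exact_mod_cast hℓpos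
    have hβ : (β : ℝ) = 6 * ℓ * (1 / lam) := by
      rw [hℓ]
      field_simp
    have hn : (n : ℝ) ≤ 4 * (1 / lam) + 1 := by
      refine le_of_mul_le_mul_left ?_ (by positivity : (0 : ℝ) < 6 * ℓ)
      rw [hβ] at hbound
      linarith
    have hpos : 0 < 1 / lam := by positivity
    rw [div_eq_mul_one_div]
    linarith
  · have hdel : H.deleteEdges {s(a, b)} = H := by
      rw [deleteEdges_eq_self]
      simpa using hab
    refine ⟨H, ?_, hP1, fun u v h h' => hP2 u v (deleteEdges_le _ h) h', ?_⟩
    · rw [← hdel]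
      exact deleteEdges_mono hHG
    · rw [hdel, symmDiff_self, Set.bot_eq_empty, Set.ncard_empty, Nat.cast_zero]
      positivity
end
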